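/- arXiv:1405.5606 — 2 statements merged into one kernel-verified Lean document; each statement's English description precedes it below -/
import Mathlib

section
/- For every m ∈ ℕ and every Δ ∈ {≤, =, ≥}, three components suffice under the index-m restriction: L_m(CD_∞, CF[−λ], Δm) = L_m(CD_3, CF[−λ], Δm) and L_m(CD_∞, CF[−λ], (t∧Δm)) = L_m(CD_3, CF[−λ], (t∧Δm)), both with and without erasing rules. -/
namespace CDHybrid

/-- Symbols: nonterminals are natural numbers, terminals come from `T`. -/
abbrev Symb (T : Type) := ℕ ⊕ T

/-- Sentential forms. -/
abbrev SForm (T : Type) := List (Symb T)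

/-- A context-free rule `A → z`. -/
abbrev Rule (T : Type) := ℕ × SForm T

/-- Number of nonterminal occurrences in a sentential form. -/
def ntCount {T : Type} (x : SForm T) : ℕ := (x.filter Sum.isLeft).length

/-- One rewriting step using some rule of the rule set `P`. -/
def RStep {T : Type} (P : List (Rule T)) (x y : SForm T) : Prop :=
  ∃ r ∈ P, ∃ u v : SForm T, x = u ++ Sum.inl r.1 :: v ∧ y = u ++ r.2 ++ v

/-- `m`-step derivation using only rules of `P`. -/
def StepsN {T : Type} (P : List (Rule T)) : ℕ → SForm T → SForm T → Prop
  | 0, x, y => x = y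
  | m + 1, x, y => ∃ z, RStep P x z ∧ StepsN P m z y

/-- `m`-step derivation using only rules of `P`, all intermediate (and the final)
sentential forms having at most `b` occurrences of nonterminals. -/
def StepsNB {T : Type} (P : List (Rule T)) (b : ℕ) : ℕ → SForm T → SForm T → Prop
  | 0, x, y => x = y
  | m + 1, x, y => ∃ z, RStep P x z ∧ ntCount z ≤ b ∧ StepsNB P b m z y

/-- Derivation modes of CD grammar systems. -/
inductive Mode where
  | eq : ℕ → Mode
  | le : ℕ → Mode
  | ge : ℕ → Mode
  | star : Mode
  | t : Mode
  | conj : Mode → Mode → Mode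

/-- The predicate of a derivation mode: `modeOK P f m y` holds if an `m`-step
derivation by the component `P` ending in `y` is acceptable for mode `f`. -/
def modeOK {T : Type} (P : List (Rule T)) : Mode → ℕ → SForm T → Prop
  | .eq k, m, _ => m = k
  | .le k, m, _ => m ≤ k
  | .ge k, m, _ => k ≤ m
  | .star, _, _ => True
  | .t, _, y => ¬ ∃ z, RStep P y z
  | .conj f g, m, y => modeOK P f m y ∧ modeOK P g m y

/-- A CD grammar system with context-free components. -/
structure CDGS (T : Type) where
  deg : ℕ
  start : ℕ
  comp : Fin deg → List (Rule T)

/-- λ-freeness: no erasing rules. -/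
def CDGS.LamFree {T : Type} (G : CDGS T) : Prop :=
  ∀ i : Fin G.deg, ∀ r ∈ G.comp i, r.2 ≠ []

/-- One derivation step of a component of `G` in mode `f`. -/
def CDGS.ModeStep {T : Type} (G : CDGS T) (f : Mode) (x y : SForm T) : Prop :=
  ∃ i : Fin G.deg, ∃ m : ℕ, StepsN (G.comp i) m x y ∧ modeOK (G.comp i) f m y

/-- One derivation step of a component of `G` in mode `f`, with all produced
sentential forms having at most `b` nonterminal occurrences. -/
def CDGS.ModeStepB {T : Type} (G : CDGS T) (f : Mode) (b : ℕ) (x y : SForm T) : Prop :=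
  ∃ i : Fin G.deg, ∃ m : ℕ, StepsNB (G.comp i) b m x y ∧ modeOK (G.comp i) f m y

/-- The language generated by `G` in mode `f`. -/
def CDGS.lang {T : Type} (G : CDGS T) (f : Mode) : Set (List T) :=
  { w | Relation.TransGen (G.ModeStep f) [Sum.inl G.start] (w.map Sum.inr) }

/-- The words of the language of `G` in mode `f` possessing a derivation of index
at most `b`, i.e., all sentential forms occurring in it have at most `b`
nonterminal occurrences. -/
def CDGS.langB {T : Type} (G : CDGS T) (f : Mode) (b : ℕ) : Set (List T) :=
  { w | ntCount ([Sum.inl G.start] : SForm T) ≤ b ∧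
      Relation.TransGen (G.ModeStepB f b) [Sum.inl G.start] (w.map Sum.inr) }

/-- Two languages are considered equal iff they differ at most in the empty word. -/
def EqL {T : Type} (L₁ L₂ : Set (List T)) : Prop := L₁ \ {[]} = L₂ \ {[]}

/-- The family `L(CD_n, CF[−λ], f)`; `lf = true` forbids erasing rules. -/
def CDFam (T : Type) (lf : Bool) (n : ℕ) (f : Mode) : Set (Set (List T)) :=
  { L | ∃ G : CDGS T, G.deg ≤ n ∧ (lf = true → G.LamFree) ∧ EqL (G.lang f) L }

/-- The family `L(CD_∞, CF[−λ], f)`. -/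
def CDFamInf (T : Type) (lf : Bool) (f : Mode) : Set (Set (List T)) :=
  { L | ∃ G : CDGS T, (lf = true → G.LamFree) ∧ EqL (G.lang f) L }

/-- The family `L_m(CD_n, CF[−λ], f)` of such languages of index at most `m`. -/
def CDFamInd (T : Type) (lf : Bool) (n : ℕ) (f : Mode) (m : ℕ) : Set (Set (List T)) :=
  { L | ∃ G : CDGS T, G.deg ≤ n ∧ (lf = true → G.LamFree) ∧ EqL (G.lang f) L ∧
      G.lang f ⊆ G.langB f m }

/-- The family `L_m(CD_∞, CF[−λ], f)`. -/
def CDFamIndInf (T : Type) (lf : Bool) (f : Mode) (m : ℕ) : Set (Set (List T)) :=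
  { L | ∃ G : CDGS T, (lf = true → G.LamFree) ∧ EqL (G.lang f) L ∧ G.lang f ⊆ G.langB f m }

/-- The family `L_fin(CD_∞, CF[−λ], f)`. -/
def CDFamFinInf (T : Type) (lf : Bool) (f : Mode) : Set (Set (List T)) :=
  { L | ∃ m : ℕ, 1 ≤ m ∧ L ∈ CDFamIndInf T lf f m }

/-- A context-free grammar. -/
structure CFG (T : Type) where
  start : ℕ
  rules : List (Rule T)

/-- The language generated by a context-free grammar. -/
def CFG.lang {T : Type} (G : CFG T) : Set (List T) :=
  { w | Relation.ReflTransGen (RStep G.rules) [Sum.inl G.start] (w.map Sum.inr) }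

/-- The words of `G.lang` having a derivation of index at most `m`. -/
def CFG.langB {T : Type} (G : CFG T) (m : ℕ) : Set (List T) :=
  { w | ntCount ([Sum.inl G.start] : SForm T) ≤ m ∧
      Relation.ReflTransGen (fun x y => RStep G.rules x y ∧ ntCount y ≤ m)
        [Sum.inl G.start] (w.map Sum.inr) }

/-- The family `L(CF)` of context-free languages. -/
def CFFam (T : Type) : Set (Set (List T)) := { L | ∃ G : CFG T, EqL G.lang L }

/-- The family `L_m(CF)` of context-free languages of index at most `m`. -/
def CFFamInd (T : Type) (m : ℕ) : Set (Set (List T)) :=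
  { L | ∃ G : CFG T, EqL G.lang L ∧ G.lang ⊆ G.langB m }

/-- The family `L_fin(CF)` of context-free languages of finite index. -/
def CFFamFin (T : Type) : Set (Set (List T)) :=
  { L | ∃ m : ℕ, 1 ≤ m ∧ L ∈ CFFamInd T m }

/-- A grammar is linear if every right-hand side contains at most one nonterminal. -/
def CFG.Linear {T : Type} (G : CFG T) : Prop := ∀ r ∈ G.rules, ntCount r.2 ≤ 1

/-- The family `L(LIN)` of linear context-free languages. -/
def LinFam (T : Type) : Set (Set (List T)) :=
  { L | ∃ G : CFG T, G.Linear ∧ EqL G.lang L }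

/-- The family `L(FIN)` of finite languages. -/
def FinFam (T : Type) : Set (Set (List T)) := { L | L.Finite }

/-- A programmed grammar with context-free rules. -/
structure PG (T : Type) where
  start : ℕ
  nLab : ℕ
  rule : Fin nLab → Rule T
  succ : Fin nLab → Set (Fin nLab)
  fail : Fin nLab → Set (Fin nLab)

def PG.LamFree {T : Type} (G : PG T) : Prop := ∀ r : Fin G.nLab, (G.rule r).2 ≠ []

/-- No appearance checking: all failure fields are empty. -/
def PG.NoAC {T : Type} (G : PG T) : Prop := ∀ r : Fin G.nLab, G.fail r = ∅

/-- One step of a programmed grammar on pairs (sentential form, label). -/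
def PG.PStep {T : Type} (G : PG T) (p q : SForm T × Fin G.nLab) : Prop :=
  (∃ u v : SForm T, p.1 = u ++ Sum.inl (G.rule p.2).1 :: v ∧
      q.1 = u ++ (G.rule p.2).2 ++ v ∧ q.2 ∈ G.succ p.2) ∨
  (Sum.inl (G.rule p.2).1 ∉ p.1 ∧ q.1 = p.1 ∧ q.2 ∈ G.fail p.2)

/-- The language generated by a programmed grammar. -/
def PG.lang {T : Type} (G : PG T) : Set (List T) :=
  { w | ∃ r₁ r₂ : Fin G.nLab,
      Relation.ReflTransGen G.PStep ([Sum.inl G.start], r₁) (w.map Sum.inr, r₂) }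

/-- The words of `G.lang` having a derivation of index at most `m`. -/
def PG.langB {T : Type} (G : PG T) (m : ℕ) : Set (List T) :=
  { w | ∃ r₁ r₂ : Fin G.nLab, ntCount ([Sum.inl G.start] : SForm T) ≤ m ∧
      Relation.ReflTransGen (fun p q => G.PStep p q ∧ ntCount q.1 ≤ m)
        ([Sum.inl G.start], r₁) (w.map Sum.inr, r₂) }

/-- The family `L_m(P, CF[−λ][, ac])`: programmed languages of index at most `m`;
`ac = false` forbids appearance checking, `lf = true` forbids erasing rules. -/
def PFamInd (T : Type) (lf ac : Bool) (m : ℕ) : Set (Set (List T)) :=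
  { L | ∃ G : PG T, (lf = true → G.LamFree) ∧ (ac = false → G.NoAC) ∧
      EqL G.lang L ∧ G.lang ⊆ G.langB m }

/-- The family `L_fin(P, CF[−λ][, ac])` of programmed languages of finite index. -/
def PFamFin (T : Type) (lf ac : Bool) : Set (Set (List T)) :=
  { L | ∃ m : ℕ, 1 ≤ m ∧ L ∈ PFamInd T lf ac m }

/-!
In the modes `≤ m`, a component may stop after every single step, so all components can be merged
into one.

For the other modes, split a sentential form into its shape, whose holes stand for the nonterminals,
and the sequence of nonterminals filling them. In derivations of index `m` this sequence has length
at most `m`, so that, together with the component at work and its number of steps (all values above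
`m` being identified), it ranges over finitely many states. Thus the system is simulated by finitely
many transitions, each of which fills one hole of the shape and changes the state.

Let now every hole be filled with a nonterminal telling the state and the number of the hole. A
component performs a transition by rewriting each of these nonterminals once. As there are at most
`m` of them, idle steps of the first one make this take exactly `m` steps. If moreover no two
transitions of the component share a source state and none leads to a source state, the component is
then stuck, and all the modes in question force it to perform exactly one transition.

Finally, add a clock to the states. Two components, one for the even and one for the odd times,
advance the clock, and the third can perform the `k`-th transition at time `2 * k + 1` only, after
which the clock is reset to `0`. No component leads to one of its own source states, so these three
suffice.
-/

section Derivations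

variable {T : Type} {P P' : List (Rule T)} {n b : ℕ} {x y z : SForm T}

theorem RStep.mono (h : P ⊆ P') : RStep P x y → RStep P' x y
  | ⟨r, hr, hxy⟩ => ⟨r, h hr, hxy⟩

theorem StepsN.mono (h : P ⊆ P') : ∀ {n x}, StepsN P n x y → StepsN P' n x y
  | 0, _, hxy => hxy
  | _ + 1, _, ⟨z, hxz, hzy⟩ => ⟨z, hxz.mono h, StepsN.mono h hzy⟩

theorem StepsNB.mono (h : P ⊆ P') : ∀ {n x}, StepsNB P b n x y → StepsNB P' b n x y
  | 0, _, hxy => hxy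
  | _ + 1, _, ⟨z, hxz, hz, hzy⟩ => ⟨z, hxz.mono h, hz, StepsNB.mono h hzy⟩

theorem StepsNB.stepsN : ∀ {n x}, StepsNB P b n x y → StepsN P n x y
  | 0, _, hxy => hxy
  | _ + 1, _, ⟨z, hxz, _, hzy⟩ => ⟨z, hxz, StepsNB.stepsN hzy⟩

theorem StepsN.snoc (hyz : RStep P y z) : ∀ {n x}, StepsN P n x y → StepsN P (n + 1) x z
  | 0, _, rfl => ⟨z, hyz, rfl⟩
  | _ + 1, _, ⟨a, hxa, hay⟩ => ⟨a, hxa, StepsN.snoc hyz hay⟩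

theorem singleton_inl_ne_map_inr (A : ℕ) (w : List T) :
    ([Sum.inl A] : SForm T) ≠ w.map Sum.inr := by
  cases w <;> simp

theorem transGen_map_inr_iff {r : SForm T → SForm T → Prop} {A : ℕ} {w : List T} :
    Relation.TransGen r [Sum.inl A] (w.map Sum.inr) ↔
      Relation.ReflTransGen r [Sum.inl A] (w.map Sum.inr) := by
  rw [Relation.reflTransGen_iff_eq_or_transGen,
    or_iff_right (singleton_inl_ne_map_inr A w).symm]

theorem CDGS.ModeStepB.modeStep {G : CDGS T} {f : Mode} :
    G.ModeStepB f b x y → G.ModeStep f x y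
  | ⟨i, n, hxy, hf⟩ => ⟨i, n, hxy.stepsN, hf⟩

theorem CDGS.langB_subset_lang (G : CDGS T) (f : Mode) (b : ℕ) : G.langB f b ⊆ G.lang f :=
  fun _ hw => Relation.TransGen.mono (fun _ _ => CDGS.ModeStepB.modeStep) _ _ hw.2

end Derivations

section AtMost

variable {T : Type} {k b : ℕ}

/-- The system whose only component is the union of all components of `G`; in the modes `≤ k`
it replaces `G`. -/
def CDGS.merge (G : CDGS T) : CDGS T where
  deg := 1
  start := G.start
  comp _ := (List.finRange G.deg).flatMap G.comp

theorem CDGS.mem_comp_merge {G : CDGS T} {j : Fin G.merge.deg} {r : Rule T} :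
    r ∈ G.merge.comp j ↔ ∃ i, r ∈ G.comp i := by
  simp [CDGS.merge]

theorem CDGS.comp_subset_comp_merge {G : CDGS T} (i : Fin G.deg) (j : Fin G.merge.deg) :
    G.comp i ⊆ G.merge.comp j :=
  fun _ hr => CDGS.mem_comp_merge.2 ⟨i, hr⟩

theorem CDGS.LamFree.merge {G : CDGS T} (hG : G.LamFree) : G.merge.LamFree := fun _ r hr =>
  have ⟨i, hi⟩ := CDGS.mem_comp_merge.1 hr
  hG i r hi

theorem CDGS.reflTransGen_of_stepsN_merge {G : CDGS T} (hk : 1 ≤ k) {j : Fin G.merge.deg}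
    {y : SForm T} : ∀ {n x}, StepsN (G.merge.comp j) n x y →
      Relation.ReflTransGen (G.ModeStep (.le k)) x y
  | 0, _, rfl => .refl
  | _ + 1, _, ⟨z, ⟨r, hr, hxz⟩, hzy⟩ =>
    have ⟨i, hi⟩ := CDGS.mem_comp_merge.1 hr
    .head ⟨i, 1, ⟨z, ⟨r, hi, hxz⟩, rfl⟩, hk⟩ (CDGS.reflTransGen_of_stepsN_merge hk hzy)

theorem CDGS.lang_merge_le (G : CDGS T) (hk : 1 ≤ k) :
    G.merge.lang (.le k) = G.lang (.le k) := by
  refine Set.Subset.antisymm (fun w hw => ?_) fun w hw => ?_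
  · refine transGen_map_inr_iff.2 ?_
    refine Relation.ReflTransGen.lift' id ?_ _ _ (transGen_map_inr_iff.1 hw)
    rintro x y ⟨j, n, hxy, -⟩
    exact CDGS.reflTransGen_of_stepsN_merge hk hxy
  · refine Relation.TransGen.mono ?_ _ _ hw
    rintro x y ⟨i, n, hxy, hn⟩
    exact ⟨(0 : Fin 1), n, hxy.mono (CDGS.comp_subset_comp_merge i _), hn⟩

theorem CDGS.langB_le_subset_langB_merge (G : CDGS T) :
    G.langB (.le k) b ⊆ G.merge.langB (.le k) b := by
  rintro w ⟨hb, hw⟩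
  refine ⟨hb, Relation.TransGen.mono ?_ _ _ hw⟩
  rintro x y ⟨i, n, hxy, hn⟩
  exact ⟨(0 : Fin 1), n, hxy.mono (CDGS.comp_subset_comp_merge i _), hn⟩

end AtMost

section Shapes

variable {T : Type}

/-- The nonterminals of a sentential form, from left to right. -/
def nts (y : SForm T) : List ℕ := y.filterMap Sum.getLeft?

/-- Sentential forms whose nonterminals are anonymous: `none` is a hole. Together with the
nonterminals filling its holes, a shape determines a sentential form. -/
abbrev Shape (T : Type) := List (Option T)

/-- The shape of a sentential form: every nonterminal becomes a hole. -/
def shape (y : SForm T) : Shape T := y.map Sum.getRight?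

/-- The number of holes of a shape, i.e. of nonterminals in the forms of this shape. -/
def holes (x : Shape T) : ℕ := x.countP Option.isNone

variable {x u v : Shape T} {y y' : SForm T} {A i : ℕ} {a : T} {w : List T}

@[simp] theorem nts_nil : nts ([] : SForm T) = [] := rfl
@[simp] theorem nts_append : nts (y ++ y') = nts y ++ nts y' := List.filterMap_append
@[simp] theorem nts_inl_cons : nts (Sum.inl A :: y) = A :: nts y := rfl
@[simp] theorem nts_inr_cons : nts (Sum.inr a :: y) = nts y := rfl

@[simp] theorem shape_append : shape (y ++ y') = shape y ++ shape y' := List.map_append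
@[simp] theorem shape_inl_cons : shape (Sum.inl A :: y) = none :: shape y := rfl
@[simp] theorem shape_inr_cons : shape (Sum.inr a :: y) = some a :: shape y := rfl

@[simp] theorem holes_nil : holes ([] : Shape T) = 0 := rfl
@[simp] theorem holes_append : holes (u ++ v) = holes u + holes v := List.countP_append
@[simp] theorem holes_none_cons : holes (none :: x) = holes x + 1 := by simp [holes]
@[simp] theorem holes_some_cons : holes (some a :: x) = holes x := by simp [holes]

theorem length_nts (y : SForm T) : (nts y).length = ntCount y := by
  induction y with
  | nil => rfl
  | cons s y ih =>
    cases s with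
    | inl A => exact congrArg (· + 1) ih
    | inr a => exact ih

theorem holes_shape (y : SForm T) : holes (shape y) = (nts y).length := by
  induction y with
  | nil => rfl
  | cons s y ih => cases s <;> simpa using ih

theorem nts_map_inl (L : List ℕ) : nts (L.map Sum.inl : SForm T) = L := by
  induction L with
  | nil => rfl
  | cons A L ih => simp [ih]

theorem nts_map_inr (w : List T) : nts (w.map Sum.inr) = [] := by
  induction w with
  | nil => rfl
  | cons a w ih => simpa using ih

theorem shape_map_inr (w : List T) : shape (w.map Sum.inr) = w.map some := by
  simp [shape]

theorem eq_map_inr_of_shape_eq (hy : shape y = w.map some) : y = w.map Sum.inr := by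
  induction w generalizing y with
  | nil => simpa [shape] using hy
  | cons a w ih =>
    match y with
    | [] | .inl _ :: _ => simp [shape] at hy
    | .inr b :: y =>
      obtain ⟨hb, hy⟩ := List.cons.inj hy
      rw [ih hy, Option.some.inj hb, List.map_cons]

theorem exists_eq_append_none_cons (hi : i < holes x) :
    ∃ u v, x = u ++ none :: v ∧ holes u = i := by
  induction x generalizing i with
  | nil => simp at hi
  | cons s x ih =>
    match s, i with
    | none, 0 => exact ⟨[], x, rfl, rfl⟩
    | none, i + 1 =>
      obtain ⟨u, v, rfl, hu⟩ := ih (by simpa using hi)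
      exact ⟨none :: u, v, rfl, by simp [hu]⟩
    | some a, i =>
      obtain ⟨u, v, rfl, hu⟩ := ih (by simpa using hi)
      exact ⟨some a :: u, v, rfl, by simp [hu]⟩

theorem exists_eq_append_inl_cons {L L' : List ℕ} (hs : shape y = u ++ none :: v)
    (hn : nts y = L ++ A :: L') (hu : holes u = L.length) :
    ∃ u' v', y = u' ++ Sum.inl A :: v' ∧ shape u' = u ∧ shape v' = v ∧
      nts u' = L ∧ nts v' = L' := by
  obtain ⟨u', y', rfl, rfl, hy'⟩ := List.map_eq_append_iff.1 hs
  obtain ⟨s, v', rfl, hs, rfl⟩ := List.map_eq_cons_iff.1 hy'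
  obtain ⟨B, rfl⟩ : ∃ B, s = Sum.inl B := by cases s <;> simp_all
  rw [nts_append, nts_inl_cons] at hn
  obtain ⟨rfl, hn'⟩ := List.append_inj hn ((holes_shape u').symm.trans hu)
  obtain ⟨rfl, rfl⟩ := List.cons.inj hn'
  exact ⟨u', v', rfl, rfl, rfl, rfl, rfl⟩

theorem exists_rStep_iff {P : List (Rule T)} : (∃ z, RStep P y z) ↔ ∃ r ∈ P, r.1 ∈ nts y := by
  constructor
  · rintro ⟨z, r, hr, u, v, rfl, rfl⟩
    exact ⟨r, hr, by simp⟩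
  · rintro ⟨r, hr, hmem⟩
    obtain ⟨u, v, rfl⟩ := List.append_of_mem (a := Sum.inl r.1) (l := y) (by simpa [nts] using hmem)
    exact ⟨_, r, hr, u, v, rfl, rfl⟩

theorem StepsNB.eq_of_nts_eq_nil {P : List (Rule T)} {n b : ℕ} (h : StepsNB P b n y y')
    (hy : nts y = []) : n = 0 ∧ y = y' := by
  match n, h with
  | 0, h => exact ⟨rfl, h⟩
  | n + 1, ⟨z, hyz, _⟩ =>
    obtain ⟨r, -, hr⟩ := exists_rStep_iff.1 ⟨z, hyz⟩
    simp [hy] at hr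

end Shapes

section Modes

variable {T : Type} {m n n' : ℕ} {f : Mode}

/-- The number of steps already taken by a component, as far as a mode with bound `m` can tell:
all values above `m` are identified. -/
def cap (m n : ℕ) : Fin (m + 2) := ⟨min n (m + 1), by omega⟩

theorem cap_succ_congr (h : cap m n = cap m n') : cap m (n + 1) = cap m (n' + 1) := by
  simp only [cap, Fin.mk.injEq] at h ⊢
  omega

/-- The modes with bound `m` in which a component may stop after `m` steps if it is stuck, and has
to work for at least `m` steps or until it is stuck; moreover, acceptance only depends on the
capped number of steps and on the nonterminals of the form. These are the modes `= m`, `≥ m`,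
`t ∧ ≤ m`, `t ∧ = m` and `t ∧ ≥ m`. -/
structure IsTurnMode (T : Type) (m : ℕ) (f : Mode) : Prop where
  modeOK_of_stuck : ∀ (P : List (Rule T)) y, (¬∃ z, RStep P y z) → modeOK P f m y
  eq_or_stuck : ∀ (P : List (Rule T)) n y, modeOK P f n y → n ≤ m → n = m ∨ ¬∃ z, RStep P y z
  congr : ∀ (P : List (Rule T)) {n n'} {y y' : SForm T}, cap m n = cap m n' → nts y = nts y' →
    modeOK P f n y → modeOK P f n' y'

theorem isTurnMode_eq (T : Type) (m : ℕ) : IsTurnMode T m (.eq m) where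
  modeOK_of_stuck _ _ _ := rfl
  eq_or_stuck _ _ _ hn _ := .inl hn
  congr _ _ _ _ _ hc _ hn := by
    simp only [cap, Fin.mk.injEq, modeOK] at hc hn ⊢
    omega

theorem isTurnMode_ge (T : Type) (m : ℕ) : IsTurnMode T m (.ge m) where
  modeOK_of_stuck _ _ _ := le_rfl
  eq_or_stuck _ _ _ hn hm := .inl (hm.antisymm hn)
  congr _ _ _ _ _ hc _ hn := by
    simp only [cap, Fin.mk.injEq, modeOK] at hc hn ⊢
    omega

theorem isTurnMode_conj_t (T : Type) (m : ℕ) {d : ℕ → Mode}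
    (hd : d = Mode.le ∨ d = Mode.eq ∨ d = Mode.ge) : IsTurnMode T m (.conj .t (d m)) where
  modeOK_of_stuck _ _ hy := ⟨hy, by rcases hd with rfl | rfl | rfl <;> simp [modeOK]⟩
  eq_or_stuck _ _ _ hn _ := .inr hn.1
  congr P n n' y y' hc hy hn := by
    refine ⟨?_, ?_⟩
    · have := hn.1
      simpa only [modeOK, exists_rStep_iff, hy] using this
    · have := hn.2
      simp only [cap, Fin.mk.injEq] at hc
      rcases hd with rfl | rfl | rfl <;> simp only [modeOK] at this ⊢ <;> omega

end Modes

section FillSystems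

variable {Q T : Type}

/-- A transition of a fill system: in state `src`, the hole number `pos` (counted from `0`) is
replaced by `repl` and the state becomes `tgt`. -/
structure Transition (Q T : Type) where
  src : Q
  pos : ℕ
  repl : Shape T
  tgt : Q

/-- One step of the fill system with transitions `R`; configurations consist of a state and a
shape. -/
def FillStep (R : Set (Transition Q T)) (p q : Q × Shape T) : Prop :=
  ∃ τ ∈ R, ∃ u v, p = (τ.src, u ++ none :: v) ∧ holes u = τ.pos ∧ q = (τ.tgt, u ++ τ.repl ++ v)

/-- The language of a fill system started in state `q₀` with a single hole. -/
def fillLang (R : Set (Transition Q T)) (q₀ : Q) : Set (List T) :=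
  {w | ∃ q, Relation.ReflTransGen (FillStep R) (q₀, [none]) (q, w.map some)}

/-- The transition that only changes the state: it refills the first hole with a hole. -/
def Transition.idle (s t : Q) : Transition Q T := ⟨s, 0, [none], t⟩

/-- If a shape in state `q` has `width q ≤ m` holes, then `τ` is applicable in its source state
and keeps this invariant. -/
structure Transition.Respects (width : Q → ℕ) (m : ℕ) (τ : Transition Q T) : Prop where
  pos_lt : τ.pos < width τ.src
  width_tgt : width τ.tgt + 1 = width τ.src + holes τ.repl
  width_src_le : width τ.src ≤ m
  width_tgt_le : width τ.tgt ≤ m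

variable {R : Set (Transition Q T)} {width : Q → ℕ} {m : ℕ} {p q : Q × Shape T}

theorem FillStep.idle {s s' : Q} {x : Shape T} (h : Transition.idle s s' ∈ R) (hx : 0 < holes x) :
    FillStep R (s, x) (s', x) := by
  obtain ⟨u, v, rfl, hu⟩ := exists_eq_append_none_cons hx
  exact ⟨_, h, u, v, rfl, hu, by simp [Transition.idle]⟩

theorem FillStep.holes_eq_width (h : FillStep R p q) (hR : ∀ τ ∈ R, τ.Respects width m)
    (hp : holes p.2 = width p.1) : holes q.2 = width q.1 := by
  obtain ⟨τ, hτ, u, v, rfl, -, rfl⟩ := h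
  have := (hR τ hτ).width_tgt
  simp only [holes_append, holes_none_cons] at hp ⊢
  omega

theorem FillStep.holes_eq_width_of_reflTransGen (h : Relation.ReflTransGen (FillStep R) p q)
    (hR : ∀ τ ∈ R, τ.Respects width m) (hp : holes p.2 = width p.1) :
    holes q.2 = width q.1 := by
  induction h with
  | refl => exact hp
  | tail _ h ih => exact h.holes_eq_width hR ih

end FillSystems

section GradedRules

variable {T : Type}

/-- The sum of `g A` over all nonterminal occurrences `A` of a sentential form. -/
def ntSum (g : ℕ → ℕ) (x : SForm T) : ℕ := ((nts x).map g).sum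

/-- Replaces every nonterminal occurrence `A` by `σ A`. -/
def subst (σ : ℕ → SForm T) (x : SForm T) : SForm T :=
  x.flatMap (Sum.elim σ fun a => [Sum.inr a])

/-- The larger of the numbers of nonterminal occurrences in `A` and in its normal form `nf A`: the
space that has to be reserved for `A` in a derivation of bounded index. -/
def peak (nf : ℕ → SForm T) (A : ℕ) : ℕ := max 1 (ntCount (nf A))

/-- `P` rewrites every nonterminal `A` to `nf A` in exactly `rank A` steps, whatever choices are
made, and it can do so without exceeding `peak nf A` nonterminal occurrences. -/
structure IsGraded (P : List (Rule T)) (rank : ℕ → ℕ) (nf : ℕ → SForm T) : Prop where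
  rank_rule : ∀ r ∈ P, ntSum rank r.2 + 1 = rank r.1
  nf_rule : ∀ r ∈ P, subst nf r.2 = nf r.1
  peak_rule : ∀ r ∈ P, ntSum (peak nf) r.2 ≤ peak nf r.1
  exists_rule : ∀ A, rank A ≠ 0 → ∃ z, (A, z) ∈ P
  nf_of_rank_eq_zero : ∀ A, rank A = 0 → nf A = [Sum.inl A]

variable {P : List (Rule T)} {rank : ℕ → ℕ} {nf σ : ℕ → SForm T} {g : ℕ → ℕ} {A n b : ℕ} {a : T}
  {x y : SForm T}

@[simp] theorem ntSum_nil : ntSum g ([] : SForm T) = 0 := rfl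
@[simp] theorem ntSum_append : ntSum g (x ++ y) = ntSum g x + ntSum g y := by simp [ntSum]
@[simp] theorem ntSum_inl_cons : ntSum g (Sum.inl A :: x) = g A + ntSum g x := by simp [ntSum]
@[simp] theorem ntSum_inr_cons : ntSum g (Sum.inr a :: x) = ntSum g x := by simp [ntSum]

@[simp] theorem subst_nil : subst σ ([] : SForm T) = [] := rfl
@[simp] theorem subst_append : subst σ (x ++ y) = subst σ x ++ subst σ y := List.flatMap_append
@[simp] theorem subst_inl_cons : subst σ (Sum.inl A :: x) = σ A ++ subst σ x := rfl
@[simp] theorem subst_inr_cons : subst σ (Sum.inr a :: x) = Sum.inr a :: subst σ x := rfl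

theorem ntSum_eq_zero_iff : ntSum g x = 0 ↔ ∀ A ∈ nts x, g A = 0 := by
  simp [ntSum, List.sum_eq_zero_iff]

theorem ntCount_le_ntSum_peak : ntCount x ≤ ntSum (peak nf) x := by
  rw [← length_nts, ← List.length_map (peak nf)]
  exact List.length_le_sum_of_one_le _ (by simp [peak])

theorem subst_eq_self (h : ∀ A ∈ nts x, σ A = [Sum.inl A]) : subst σ x = x := by
  induction x with
  | nil => rfl
  | cons s x ih => cases s <;> simp_all

namespace IsGraded

variable (h : IsGraded P rank nf)
include h

theorem exists_rStep_iff : (∃ z, RStep P x z) ↔ ntSum rank x ≠ 0 := by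
  rw [CDHybrid.exists_rStep_iff, Ne, ntSum_eq_zero_iff, not_forall₂]
  constructor
  · rintro ⟨r, hr, hx⟩
    exact ⟨r.1, hx, by have := h.rank_rule r hr; omega⟩
  · rintro ⟨A, hx, hA⟩
    obtain ⟨z, hz⟩ := h.exists_rule A hA
    exact ⟨_, hz, hx⟩

theorem subst_eq_self (hx : ntSum rank x = 0) : subst nf x = x :=
  CDHybrid.subst_eq_self fun A hA => h.nf_of_rank_eq_zero A (ntSum_eq_zero_iff.1 hx A hA)

theorem rank_rStep (hxy : RStep P x y) : ntSum rank y + 1 = ntSum rank x := by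
  obtain ⟨r, hr, u, v, rfl, rfl⟩ := hxy
  simp only [ntSum_append, ntSum_inl_cons, ← h.rank_rule r hr]
  omega

theorem subst_rStep (hxy : RStep P x y) : subst nf y = subst nf x := by
  obtain ⟨r, hr, u, v, rfl, rfl⟩ := hxy
  simp [h.nf_rule r hr]

theorem peak_rStep (hxy : RStep P x y) : ntSum (peak nf) y ≤ ntSum (peak nf) x := by
  obtain ⟨r, hr, u, v, rfl, rfl⟩ := hxy
  have := h.peak_rule r hr
  simp only [ntSum_append, ntSum_inl_cons]
  omega

theorem rank_stepsN : ∀ {n x}, StepsN P n x y → ntSum rank y + n = ntSum rank x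
  | 0, _, rfl => rfl
  | n + 1, x, ⟨z, hxz, hzy⟩ => by rw [← h.rank_rStep hxz, ← rank_stepsN hzy, add_assoc]

theorem subst_stepsN : ∀ {n x}, StepsN P n x y → subst nf y = subst nf x
  | 0, _, rfl => rfl
  | n + 1, x, ⟨z, hxz, hzy⟩ => by rw [← h.subst_rStep hxz, subst_stepsN hzy]

theorem stepsNB_subst (hx : ntSum rank x = n) (hb : ntSum (peak nf) x ≤ b) :
    StepsNB P b n x (subst nf x) := by
  induction n generalizing x with
  | zero => exact (h.subst_eq_self hx).symm
  | succ n ih =>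
    obtain ⟨z, hz⟩ := h.exists_rStep_iff.2 (hx.trans_ne n.succ_ne_zero)
    have hzb := (h.peak_rStep hz).trans hb
    refine ⟨z, hz, ntCount_le_ntSum_peak.trans hzb, ?_⟩
    rw [← h.subst_rStep hz]
    exact ih (by have := h.rank_rStep hz; omega) hzb

end IsGraded

end GradedRules

section Decoration

variable {Q T : Type} [Encodable Q]

/-- The nonterminal that marks the hole number `n` in state `q` and has counted up to `p`. -/
def marker (q : Q) (n p : ℕ) : ℕ := Encodable.encode (q, n, p)

theorem marker_inj {q q' : Q} {n n' p p' : ℕ} :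
    marker q n p = marker q' n' p' ↔ q = q' ∧ n = n' ∧ p = p' := by
  simp only [marker, Encodable.encode_inj, Prod.mk.injEq]

/-- The sentential form of shape `x` whose holes, numbered from `n` on, are filled with the
markers of state `q`. -/
def deco (q : Q) : ℕ → Shape T → SForm T
  | _, [] => []
  | n, none :: x => Sum.inl (marker q n 0) :: deco q (n + 1) x
  | n, some a :: x => Sum.inr a :: deco q n x

variable {q q' : Q} {n n' : ℕ} {x y : Shape T} {σ : ℕ → SForm T} {g : ℕ → ℕ} {A : ℕ}

@[simp] theorem deco_nil : deco q n ([] : Shape T) = [] := rfl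
@[simp] theorem deco_none_cons :
    deco q n (none :: x) = Sum.inl (marker q n 0) :: deco q (n + 1) x := rfl
@[simp] theorem deco_some_cons {a : T} : deco q n (some a :: x) = Sum.inr a :: deco q n x := rfl

theorem deco_append : deco q n (x ++ y) = deco q n x ++ deco q (n + holes x) y := by
  induction x generalizing n with
  | nil => rfl
  | cons s x ih => cases s <;> simp [ih, add_assoc, add_comm 1]

theorem shape_deco : shape (deco q n x) = x := by
  induction x generalizing n with
  | nil => rfl
  | cons s x ih => cases s <;> simp [ih]

theorem ntCount_deco : ntCount (deco q n x) = holes x := by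
  rw [← length_nts, ← holes_shape, shape_deco]

theorem deco_map_some (w : List T) : deco q n (w.map some) = w.map Sum.inr :=
  eq_map_inr_of_shape_eq shape_deco

theorem mem_nts_deco (hA : A ∈ nts (deco q n x)) :
    ∃ k < holes x, A = marker q (n + k) 0 := by
  induction x generalizing n with
  | nil => simp at hA
  | cons s x ih =>
    cases s with
    | some a => simpa using ih (by simpa using hA)
    | none =>
      rw [deco_none_cons, nts_inl_cons, List.mem_cons] at hA
      rcases hA with rfl | hA
      · exact ⟨0, by simp, rfl⟩
      · obtain ⟨k, hk, rfl⟩ := ih hA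
        exact ⟨k + 1, by simpa using hk, by rw [Nat.add_right_comm, Nat.add_assoc]⟩

theorem ntSum_deco :
    ntSum g (deco q n x) = ∑ k ∈ Finset.range (holes x), g (marker q (n + k) 0) := by
  induction x generalizing n with
  | nil => rfl
  | cons s x ih =>
    cases s with
    | some a => simpa using ih
    | none => simp [ih, Finset.sum_range_succ', add_comm, add_left_comm]

theorem subst_deco (h : ∀ k < holes x, σ (marker q (n + k) 0) =
    [Sum.inl (marker q' (n' + k) 0)]) : subst σ (deco q n x) = deco q' n' x := by
  induction x generalizing n n' with
  | nil => rfl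
  | cons s x ih =>
    cases s with
    | some a => simpa using ih (by simpa using h)
    | none =>
      have h0 := h 0 (by simp)
      have hx := ih (n := n + 1) (n' := n' + 1) fun k hk => by
        simpa [add_assoc, add_comm 1] using h (k + 1) (by simpa using hk)
      rw [deco_none_cons, subst_inl_cons, hx]
      exact congrArg (· ++ _) h0

end Decoration

section Tasks

variable {Q T : Type} {width : Q → ℕ} {m : ℕ} {R : List (Transition Q T)}

/-- The number of idle steps at the hole number `n`. They make every transition last for `m` steps:
`width q` steps change the markers of state `q`, and the marker of the first hole has to count up
to `m - width q` before it may change. -/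
def padding (width : Q → ℕ) (m : ℕ) (q : Q) (n : ℕ) : ℕ := if n = 0 then m - width q else 0

/-- The task of performing `trans` at the hole number `slot`, whose marker has counted up
to `tick`. -/
structure Task (Q T : Type) where
  trans : Transition Q T
  slot : ℕ
  tick : ℕ

/-- The tasks to which the transitions in `R` give rise. -/
def tasks (width : Q → ℕ) (m : ℕ) (R : List (Transition Q T)) : List (Task Q T) :=
  R.flatMap fun τ => (List.range (width τ.src)).flatMap fun n =>
    (List.range (padding width m τ.src n + 1)).map fun p => ⟨τ, n, p⟩

theorem mem_tasks {t : Task Q T} : t ∈ tasks width m R ↔ t.trans ∈ R ∧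
    t.slot < width t.trans.src ∧ t.tick ≤ padding width m t.trans.src t.slot := by
  simp only [tasks, List.mem_flatMap, List.mem_map, List.mem_range, Nat.lt_succ_iff]
  constructor
  · rintro ⟨τ, hτ, n, hn, p, hp, rfl⟩
    exact ⟨hτ, hn, hp⟩
  · rintro ⟨hτ, hn, hp⟩
    exact ⟨_, hτ, _, hn, _, hp, rfl⟩

/-- No two transitions share a source, and no transition leads to a source. A component working
on a form can then perform one transition only. -/
structure OneShot (R : List (Transition Q T)) : Prop where
  eq_of_src_eq : ∀ τ ∈ R, ∀ τ' ∈ R, τ.src = τ'.src → τ = τ'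
  tgt_ne_src : ∀ τ ∈ R, ∀ τ' ∈ R, τ.tgt ≠ τ'.src

variable [Encodable Q]

/-- The marker representing a task. -/
def Task.lhs (t : Task Q T) : ℕ := marker t.trans.src t.slot t.tick

/-- The share of the hole number `n` in the effect of `τ`: the hole is filled or renumbered. -/
def Transition.image (τ : Transition Q T) (n : ℕ) : SForm T :=
  if n < τ.pos then deco τ.tgt n [none]
  else if n = τ.pos then deco τ.tgt n τ.repl
  else deco τ.tgt (n + holes τ.repl - 1) [none]

/-- The result of one step of work on a task. -/
def Task.rhs (width : Q → ℕ) (m : ℕ) (t : Task Q T) : SForm T :=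
  if t.tick < padding width m t.trans.src t.slot then
    [Sum.inl (marker t.trans.src t.slot (t.tick + 1))]
  else t.trans.image t.slot

/-- The component performing the transitions in `R`. -/
def fillRules (width : Q → ℕ) (m : ℕ) (R : List (Transition Q T)) : List (Rule T) :=
  (tasks width m R).map fun t => (t.lhs, t.rhs width m)

/-- The task represented by the nonterminal `A`. -/
def taskOf (width : Q → ℕ) (m : ℕ) (R : List (Transition Q T)) (A : ℕ) : Option (Task Q T) :=
  (tasks width m R).find? fun t => t.lhs = A

/-- The number of steps a nonterminal can be worked on by `fillRules width m R`. -/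
def taskRank (width : Q → ℕ) (m : ℕ) (R : List (Transition Q T)) (A : ℕ) : ℕ :=
  (taskOf width m R A).elim 0 fun t => padding width m t.trans.src t.slot - t.tick + 1

/-- The form into which `fillRules width m R` finally rewrites a nonterminal. -/
def taskResult (width : Q → ℕ) (m : ℕ) (R : List (Transition Q T)) (A : ℕ) : SForm T :=
  (taskOf width m R A).elim [Sum.inl A] fun t => t.trans.image t.slot

theorem taskOf_eq_none_iff {A : ℕ} :
    taskOf width m R A = none ↔ ∀ t ∈ tasks width m R, t.lhs ≠ A := by
  simp [taskOf]

theorem mem_tasks_of_taskOf_eq_some {t : Task Q T} {A : ℕ} (h : taskOf width m R A = some t) :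
    t ∈ tasks width m R ∧ t.lhs = A :=
  ⟨List.mem_of_find?_eq_some h, by simpa using List.find?_some h⟩

theorem exists_image_eq_deco (τ : Transition Q T) (n : ℕ) :
    ∃ k x, τ.image n = deco τ.tgt k x := by
  rw [Transition.image]
  split_ifs <;> exact ⟨_, _, rfl⟩

theorem ntCount_image (τ : Transition Q T) (n : ℕ) :
    ntCount (τ.image n) = if n = τ.pos then holes τ.repl else 1 := by
  rw [Transition.image, apply_ite ntCount, apply_ite ntCount]
  simp only [ntCount_deco]
  split_ifs <;> first | rfl | omega

theorem ntSum_eq_ntCount {g : ℕ → ℕ} {x : SForm T} (h : ∀ A ∈ nts x, g A = 1) :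
    ntSum g x = ntCount x := by
  rw [← length_nts, ntSum, List.sum_eq_card_nsmul _ 1 (by simpa using h), List.length_map,
    smul_eq_mul, mul_one]

theorem taskRank_of_taskOf_eq_none {A : ℕ} (hA : taskOf width m R A = none) :
    taskRank width m R A = 0 := by
  rw [taskRank, hA, Option.elim_none]

theorem taskResult_of_taskOf_eq_none {A : ℕ} (hA : taskOf width m R A = none) :
    taskResult width m R A = [Sum.inl A] := by
  rw [taskResult, hA, Option.elim_none]

theorem peak_of_taskOf_eq_none {A : ℕ} (hA : taskOf width m R A = none) :
    peak (taskResult width m R) A = 1 := by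
  rw [peak, taskResult_of_taskOf_eq_none hA]
  rfl

theorem taskOf_eq_none_of_not_src {q : Q} (hq : ∀ τ ∈ R, τ.src ≠ q) {n : ℕ} {x : Shape T} {A : ℕ}
    (hA : A ∈ nts (deco q n x)) : taskOf width m R A = none := by
  obtain ⟨k, -, rfl⟩ := mem_nts_deco hA
  exact taskOf_eq_none_iff.2 fun t ht h => hq _ (mem_tasks.1 ht).1 (marker_inj.1 h).1

namespace OneShot

variable (hR : OneShot R)
include hR

theorem taskOf_lhs {t : Task Q T} (ht : t ∈ tasks width m R) :
    taskOf width m R t.lhs = some t := by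
  obtain ⟨t', ht'⟩ := Option.ne_none_iff_exists'.1 fun h => taskOf_eq_none_iff.1 h t ht rfl
  obtain ⟨hmem, hlhs⟩ := mem_tasks_of_taskOf_eq_some ht'
  obtain ⟨hsrc, hslot, htick⟩ := marker_inj.1 hlhs
  have htrans := hR.eq_of_src_eq _ (mem_tasks.1 hmem).1 _ (mem_tasks.1 ht).1 hsrc
  rw [ht', Option.some_inj]
  cases t; cases t'
  congr

theorem taskRank_lhs {t : Task Q T} (ht : t ∈ tasks width m R) : taskRank width m R t.lhs =
    padding width m t.trans.src t.slot - t.tick + 1 := by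
  rw [taskRank, hR.taskOf_lhs ht, Option.elim_some]

theorem taskResult_lhs {t : Task Q T} (ht : t ∈ tasks width m R) :
    taskResult width m R t.lhs = t.trans.image t.slot := by
  rw [taskResult, hR.taskOf_lhs ht, Option.elim_some]

theorem taskOf_eq_none_of_mem_image {τ : Transition Q T} (hτ : τ ∈ R) {n A : ℕ}
    (hA : A ∈ nts (τ.image n)) : taskOf width m R A = none := by
  obtain ⟨k, x, hx⟩ := exists_image_eq_deco τ n
  exact taskOf_eq_none_of_not_src (fun τ' hτ' => (hR.tgt_ne_src τ hτ τ' hτ').symm) (hx ▸ hA)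

theorem isGraded (width : Q → ℕ) (m : ℕ) :
    IsGraded (fillRules width m R) (taskRank width m R) (taskResult width m R) := by
  have rule_spec : ∀ r ∈ fillRules width m R, ntSum (taskRank width m R) r.2 + 1 =
      taskRank width m R r.1 ∧ subst (taskResult width m R) r.2 = taskResult width m R r.1 ∧
      ntSum (peak (taskResult width m R)) r.2 ≤ peak (taskResult width m R) r.1 := by
    intro r hr
    obtain ⟨t, ht, rfl⟩ := List.mem_map.1 hr
    obtain ⟨hτ, hslot, htick⟩ := mem_tasks.1 ht
    simp only [hR.taskRank_lhs ht, hR.taskResult_lhs ht, peak, Task.rhs]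
    split_ifs with hlt
    · have hnext : (⟨t.trans, t.slot, t.tick + 1⟩ : Task Q T) ∈ tasks width m R :=
        mem_tasks.2 ⟨hτ, hslot, hlt⟩
      have hrank := hR.taskRank_lhs hnext
      have hresult := hR.taskResult_lhs hnext
      simp only [Task.lhs] at hrank hresult
      simp only [ntSum_inl_cons, ntSum_nil, subst_inl_cons, subst_nil, List.append_nil, hrank,
        hresult, peak]
      exact ⟨by omega, trivial, le_rfl⟩
    · have hnone : ∀ A ∈ nts (t.trans.image t.slot), taskOf width m R A = none :=
        fun A hA => hR.taskOf_eq_none_of_mem_image hτ hA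
      refine ⟨?_, subst_eq_self fun A hA => taskResult_of_taskOf_eq_none (hnone A hA), ?_⟩
      · rw [ntSum_eq_zero_iff.2 fun A hA => taskRank_of_taskOf_eq_none (hnone A hA)]
        omega
      · rw [ntSum_eq_ntCount fun A hA => peak_of_taskOf_eq_none (hnone A hA)]
        exact le_max_right _ _
  refine ⟨fun r hr => (rule_spec r hr).1, fun r hr => (rule_spec r hr).2.1,
    fun r hr => (rule_spec r hr).2.2, fun A hA => ?_, fun A hA => ?_⟩
  · obtain ⟨t, ht⟩ := Option.ne_none_iff_exists'.1 fun h => hA (taskRank_of_taskOf_eq_none h)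
    obtain ⟨hmem, rfl⟩ := mem_tasks_of_taskOf_eq_some ht
    exact ⟨_, List.mem_map_of_mem hmem⟩
  · cases h : taskOf width m R A with
    | none => exact taskResult_of_taskOf_eq_none h
    | some t => simp [taskRank, h] at hA

end OneShot

end Tasks

section FillGrammars

variable {Q T : Type} [Encodable Q] {width : Q → ℕ} {m : ℕ} {R : List (Transition Q T)}
  {τ : Transition Q T} {u v : Shape T}

namespace OneShot

variable (hR : OneShot R) (hτ : τ ∈ R) (hw : τ.Respects width m) (hu : holes u = τ.pos)
  (huv : holes (u ++ none :: v) = width τ.src)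

include hR hτ in
theorem taskRank_marker {n : ℕ} (hn : n < width τ.src) :
    taskRank width m R (marker τ.src n 0) = padding width m τ.src n + 1 :=
  hR.taskRank_lhs (t := ⟨τ, n, 0⟩) (mem_tasks.2 ⟨hτ, hn, Nat.zero_le _⟩)

include hR hτ in
theorem taskResult_marker {n : ℕ} (hn : n < width τ.src) :
    taskResult width m R (marker τ.src n 0) = τ.image n :=
  hR.taskResult_lhs (t := ⟨τ, n, 0⟩) (mem_tasks.2 ⟨hτ, hn, Nat.zero_le _⟩)

include hR hτ hw in
theorem ntSum_taskRank_deco {x : Shape T} (hx : holes x = width τ.src) :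
    ntSum (taskRank width m R) (deco τ.src 0 x) = m := by
  have hsum : ∀ k ∈ Finset.range (width τ.src),
      taskRank width m R (marker τ.src (0 + k) 0) = padding width m τ.src k + 1 := fun k hk => by
    rw [zero_add, hR.taskRank_marker hτ (Finset.mem_range.1 hk)]
  rw [ntSum_deco, hx, Finset.sum_congr rfl hsum, Finset.sum_add_distrib]
  have := hw.pos_lt
  have := hw.width_src_le
  simp only [padding, Finset.sum_ite_eq', Finset.mem_range, Nat.zero_lt_of_lt hw.pos_lt,
    ↓reduceIte, Finset.sum_const, Finset.card_range, smul_eq_mul, mul_one]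
  omega

include hR hτ hu huv in
theorem subst_taskResult_deco :
    subst (taskResult width m R) (deco τ.src 0 (u ++ none :: v)) =
      deco τ.tgt 0 (u ++ τ.repl ++ v) := by
  rw [holes_append, holes_none_cons] at huv
  have hleft : subst (taskResult width m R) (deco τ.src 0 u) = deco τ.tgt 0 u :=
    subst_deco fun k hk => by
      rw [zero_add, hR.taskResult_marker hτ (by omega), Transition.image, if_pos (by omega)]
      rfl
  have hmid : taskResult width m R (marker τ.src τ.pos 0) = deco τ.tgt τ.pos τ.repl := by
    rw [hR.taskResult_marker hτ (by omega), Transition.image, if_neg (by omega), if_pos rfl]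
  have hright : subst (taskResult width m R) (deco τ.src (τ.pos + 1) v) =
      deco τ.tgt (τ.pos + holes τ.repl) v :=
    subst_deco fun k hk => by
      rw [hR.taskResult_marker hτ (by omega), Transition.image, if_neg (by omega),
        if_neg (by omega),
        show τ.pos + 1 + k + holes τ.repl - 1 = τ.pos + holes τ.repl + k by omega]
      rfl
  simp [deco_append, hu, hleft, hmid, hright]

include hR hτ hw in
theorem ntSum_peak_deco {x : Shape T} (hx : holes x = width τ.src) :
    ntSum (peak (taskResult width m R)) (deco τ.src 0 x) ≤ m := by
  have hsum : ∀ k ∈ Finset.range (width τ.src), peak (taskResult width m R)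
      (marker τ.src (0 + k) 0) = 1 + if k = τ.pos then holes τ.repl - 1 else 0 := fun k hk => by
    rw [zero_add, peak, hR.taskResult_marker hτ (Finset.mem_range.1 hk), ntCount_image]
    split_ifs <;> omega
  rw [ntSum_deco, hx, Finset.sum_congr rfl hsum, Finset.sum_add_distrib, Finset.sum_ite_eq',
    if_pos (Finset.mem_range.2 hw.pos_lt), Finset.sum_const, Finset.card_range, smul_eq_mul,
    mul_one]
  have := hw.width_tgt
  have := hw.width_src_le
  have := hw.width_tgt_le
  omega

end OneShot

/-- The CD grammar system whose `c`-th component performs the transitions in `R c`. -/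
def fillGrammar {k : ℕ} (width : Q → ℕ) (m : ℕ) (R : Fin k → List (Transition Q T)) (q₀ : Q) :
    CDGS T where
  deg := k
  start := marker q₀ 0 0
  comp c := fillRules width m (R c)

namespace fillGrammar

variable {k : ℕ} {R : Fin k → List (Transition Q T)} {q₀ : Q} {f : Mode}

theorem lamFree (hR : ∀ c, ∀ τ ∈ R c, τ.repl ≠ []) : (fillGrammar width m R q₀).LamFree := by
  intro c r hr
  obtain ⟨t, ht, rfl⟩ := List.mem_map.1 hr
  simp only [Task.rhs, Transition.image]
  split_ifs
  · exact List.cons_ne_nil _ _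
  · exact List.cons_ne_nil _ _
  · exact fun h => hR c _ (mem_tasks.1 ht).1 (shape_deco.symm.trans (congrArg shape h))
  · exact List.cons_ne_nil _ _

variable (hf : IsTurnMode T m f) (hone : ∀ c, OneShot (R c))
  (hwidth : ∀ c, ∀ τ ∈ R c, τ.Respects width m) {p q : Q × Shape T}
include hf hone hwidth

theorem modeStepB_of_fillStep (hp : holes p.2 = width p.1)
    (h : FillStep {τ | ∃ c, τ ∈ R c} p q) :
    (fillGrammar width m R q₀).ModeStepB f m (deco p.1 0 p.2) (deco q.1 0 q.2) := by
  obtain ⟨τ, ⟨c, hτ⟩, u, v, rfl, hu, rfl⟩ := h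
  have hgraded := (hone c).isGraded width m
  have hsteps := hgraded.stepsNB_subst ((hone c).ntSum_taskRank_deco hτ (hwidth c τ hτ) hp)
    ((hone c).ntSum_peak_deco hτ (hwidth c τ hτ) hp)
  rw [(hone c).subst_taskResult_deco hτ hu hp] at hsteps
  refine ⟨c, m, hsteps, hf.modeOK_of_stuck _ _ fun hstep => hgraded.exists_rStep_iff.1 hstep ?_⟩
  exact ntSum_eq_zero_iff.2 fun A hA => taskRank_of_taskOf_eq_none <|
    taskOf_eq_none_of_not_src (fun τ' hτ' => ((hone c).tgt_ne_src τ hτ τ' hτ').symm) hA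

theorem exists_fillStep_of_modeStep (hp : holes p.2 = width p.1) {y : SForm T}
    (h : (fillGrammar width m R q₀).ModeStep f (deco p.1 0 p.2) y) :
    ∃ q, Relation.ReflTransGen (FillStep {τ | ∃ c, τ ∈ R c}) p q ∧ y = deco q.1 0 q.2 := by
  obtain ⟨c, n, hsteps, hok⟩ := h
  have hgraded := (hone c).isGraded width m
  have hrank := hgraded.rank_stepsN hsteps
  by_cases hsrc : ∃ τ ∈ R c, τ.src = p.1
  · obtain ⟨τ, hτ, hτp⟩ := hsrc
    obtain ⟨s, x⟩ := p
    obtain rfl : τ.src = s := hτp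
    obtain ⟨u, v, rfl, hu⟩ := exists_eq_append_none_cons (hp ▸ (hwidth c τ hτ).pos_lt)
    rw [(hone c).ntSum_taskRank_deco hτ (hwidth c τ hτ) hp] at hrank
    have hstuck : ntSum (taskRank width m (R c)) y = 0 := by
      rcases hf.eq_or_stuck _ n y hok (by omega) with rfl | hstuck
      · omega
      · by_contra hy
        exact hstuck (hgraded.exists_rStep_iff.2 hy)
    refine ⟨_, .single ⟨τ, ⟨c, hτ⟩, u, v, rfl, hu, rfl⟩, ?_⟩
    rw [← hgraded.subst_eq_self hstuck, hgraded.subst_stepsN hsteps,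
      (hone c).subst_taskResult_deco hτ hu hp]
  · push Not at hsrc
    have hzero : ntSum (taskRank width m (R c)) (deco p.1 0 p.2) = 0 :=
      ntSum_eq_zero_iff.2 fun A hA =>
        taskRank_of_taskOf_eq_none (taskOf_eq_none_of_not_src hsrc hA)
    obtain rfl : n = 0 := by omega
    exact ⟨p, .refl, hsteps.symm⟩

variable (hq₀ : width q₀ = 1)
include hq₀

theorem fillLang_subset_langB (hm : 1 ≤ m) :
    fillLang {τ | ∃ c, τ ∈ R c} q₀ ⊆ (fillGrammar width m R q₀).langB f m := by
  have hderiv : ∀ p, Relation.ReflTransGen (FillStep {τ | ∃ c, τ ∈ R c}) (q₀, [none]) p →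
      holes p.2 = width p.1 ∧ Relation.ReflTransGen ((fillGrammar width m R q₀).ModeStepB f m)
        (deco q₀ 0 [none]) (deco p.1 0 p.2) := fun p h => by
    induction h with
    | refl => exact ⟨hq₀.symm, .refl⟩
    | tail _ hstep ih =>
      exact ⟨hstep.holes_eq_width (fun τ ⟨c, hτ⟩ => hwidth c τ hτ) ih.1,
        ih.2.tail (modeStepB_of_fillStep hf hone hwidth ih.1 hstep)⟩
  rintro w ⟨q, hq⟩
  refine ⟨hm, transGen_map_inr_iff.2 ?_⟩
  rw [← deco_map_some (q := q) (n := 0)]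
  exact (hderiv _ hq).2

theorem lang_subset_fillLang :
    (fillGrammar width m R q₀).lang f ⊆ fillLang {τ | ∃ c, τ ∈ R c} q₀ := by
  have hderiv : ∀ y, Relation.ReflTransGen ((fillGrammar width m R q₀).ModeStep f)
      (deco q₀ 0 [none]) y → ∃ p : Q × Shape T, holes p.2 = width p.1 ∧ y = deco p.1 0 p.2 ∧
        Relation.ReflTransGen (FillStep {τ | ∃ c, τ ∈ R c}) (q₀, [none]) p := fun y h => by
    induction h with
    | refl => exact ⟨(q₀, [none]), hq₀.symm, rfl, .refl⟩
    | tail _ hstep ih =>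
      obtain ⟨p, hp, rfl, hderiv⟩ := ih
      obtain ⟨q, hpq, rfl⟩ := exists_fillStep_of_modeStep hf hone hwidth hp hstep
      have hq := FillStep.holes_eq_width_of_reflTransGen hpq
        (fun τ ⟨c, hτ⟩ => hwidth c τ hτ) hp
      exact ⟨q, hq, rfl, hderiv.trans hpq⟩
  intro w hw
  obtain ⟨⟨q, x⟩, -, hx, hderiv⟩ := hderiv _ (transGen_map_inr_iff.1 hw)
  obtain rfl : w.map some = x := by rw [← shape_map_inr, hx, shape_deco]
  exact ⟨q, hderiv⟩

end fillGrammar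

end FillGrammars

section ThreeComponents

variable {Q T : Type} {width : Q → ℕ} {m : ℕ} {R : List (Transition Q T)}

/-- The idle transitions advancing the clock `2 * k + a` of a configuration to `2 * k + a + 1`. -/
def ticks (R : List (Transition Q T)) (a : ℕ) : List (Transition (Q × ℕ) T) :=
  R.flatMap fun τ => (List.range R.length).map fun k =>
    .idle (τ.src, 2 * k + a) (τ.src, 2 * k + a + 1)

/-- Three one-shot lists of transitions simulating all transitions in `R`. States carry a clock;
the second and third list alternately advance it, and when it shows `2 * k + 1`, the first list can
perform the `k`-th transition in `R` and reset the clock. -/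
def clocked (R : List (Transition Q T)) : Fin 3 → List (Transition (Q × ℕ) T) :=
  ![R.zipIdx.map fun τk => ⟨(τk.1.src, 2 * τk.2 + 1), τk.1.pos, τk.1.repl, (τk.1.tgt, 0)⟩,
    ticks R 1, ticks R 0]

theorem mem_ticks {a : ℕ} {θ : Transition (Q × ℕ) T} : θ ∈ ticks R a ↔
    ∃ τ ∈ R, ∃ k < R.length, θ = .idle (τ.src, 2 * k + a) (τ.src, 2 * k + a + 1) := by
  simp only [ticks, List.mem_flatMap, List.mem_map, List.mem_range, eq_comm (a := θ)]

theorem mem_clocked_zero {θ : Transition (Q × ℕ) T} : θ ∈ clocked R 0 ↔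
    ∃ k τ, R[k]? = some τ ∧ θ = ⟨(τ.src, 2 * k + 1), τ.pos, τ.repl, (τ.tgt, 0)⟩ := by
  simp only [clocked, Matrix.cons_val_zero, List.mem_map, List.mem_zipIdx_iff_getElem?,
    Prod.exists, eq_comm (a := θ)]
  exact exists_comm

theorem oneShot_ticks (a : ℕ) : OneShot (ticks R a) where
  eq_of_src_eq θ hθ θ' hθ' h := by
    obtain ⟨τ, -, k, -, rfl⟩ := mem_ticks.1 hθ
    obtain ⟨τ', -, k', -, rfl⟩ := mem_ticks.1 hθ'
    obtain ⟨hsrc, hk⟩ := Prod.mk.inj h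
    rw [hsrc, hk]
  tgt_ne_src θ hθ θ' hθ' h := by
    obtain ⟨τ, -, k, -, rfl⟩ := mem_ticks.1 hθ
    obtain ⟨τ', -, k', -, rfl⟩ := mem_ticks.1 hθ'
    have := (Prod.mk.inj h).2
    omega

theorem oneShot_clocked : ∀ c, OneShot (clocked R c)
  | 0 =>
    { eq_of_src_eq := fun θ hθ θ' hθ' h => by
        obtain ⟨k, τ, hk, rfl⟩ := mem_clocked_zero.1 hθ
        obtain ⟨k', τ', hk', rfl⟩ := mem_clocked_zero.1 hθ'
        obtain rfl : k = k' := by simpa using (Prod.mk.inj h).2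
        obtain rfl : τ = τ' := Option.some.inj (hk.symm.trans hk')
        rfl
      tgt_ne_src := fun θ hθ θ' hθ' h => by
        obtain ⟨k, τ, -, rfl⟩ := mem_clocked_zero.1 hθ
        obtain ⟨k', τ', -, rfl⟩ := mem_clocked_zero.1 hθ'
        exact absurd (Prod.mk.inj h).2 (by omega) }
  | 1 => oneShot_ticks 1
  | 2 => oneShot_ticks 0

theorem eq_of_mem_clocked {c : Fin 3} {θ : Transition (Q × ℕ) T} (hθ : θ ∈ clocked R c) :
    ∃ τ ∈ R, ∃ j, θ = ⟨(τ.src, j), τ.pos, τ.repl, (τ.tgt, 0)⟩ ∨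
      θ = .idle (τ.src, j) (τ.src, j + 1) := by
  have hticks : ∀ {a}, θ ∈ ticks R a → ∃ τ ∈ R, ∃ j, θ = .idle (τ.src, j) (τ.src, j + 1) :=
    fun hθ => by
      obtain ⟨τ, hτ, k, -, rfl⟩ := mem_ticks.1 hθ
      exact ⟨τ, hτ, _, rfl⟩
  match c with
  | 0 =>
    obtain ⟨k, τ, hk, rfl⟩ := mem_clocked_zero.1 hθ
    exact ⟨τ, List.mem_of_getElem? hk, _, .inl rfl⟩
  | 1 | 2 =>
    obtain ⟨τ, hτ, j, hj⟩ := hticks hθ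
    exact ⟨τ, hτ, j, .inr hj⟩

theorem respects_of_mem_clocked (hR : ∀ τ ∈ R, τ.Respects width m) {c : Fin 3}
    {θ : Transition (Q × ℕ) T} (hθ : θ ∈ clocked R c) : θ.Respects (fun q => width q.1) m := by
  obtain ⟨τ, hτ, j, rfl | rfl⟩ := eq_of_mem_clocked hθ <;> have hw := hR τ hτ
  · exact ⟨hw.pos_lt, hw.width_tgt, hw.width_src_le, hw.width_tgt_le⟩
  · exact ⟨Nat.zero_lt_of_lt hw.pos_lt, rfl, hw.width_src_le, hw.width_src_le⟩

theorem repl_ne_nil_of_mem_clocked (hR : ∀ τ ∈ R, τ.repl ≠ []) {c : Fin 3}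
    {θ : Transition (Q × ℕ) T} (hθ : θ ∈ clocked R c) : θ.repl ≠ [] := by
  obtain ⟨τ, hτ, j, rfl | rfl⟩ := eq_of_mem_clocked hθ
  · exact hR τ hτ
  · exact List.cons_ne_nil _ _

theorem reflTransGen_clock {τ : Transition Q T} (hτ : τ ∈ R) {x : Shape T} (hx : 0 < holes x) :
    ∀ {j : ℕ}, j < 2 * R.length →
      Relation.ReflTransGen (FillStep {θ | ∃ c, θ ∈ clocked R c}) ((τ.src, 0), x) ((τ.src, j), x)
  | 0, _ => .refl
  | j + 1, hj => by
    refine (reflTransGen_clock hτ hx (Nat.lt_of_succ_lt hj)).tail (FillStep.idle ?_ hx)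
    rcases Nat.even_or_odd' j with ⟨k, rfl | rfl⟩
    · exact ⟨2, mem_ticks.2 ⟨τ, hτ, k, by omega, rfl⟩⟩
    · exact ⟨1, mem_ticks.2 ⟨τ, hτ, k, by omega, rfl⟩⟩

theorem FillStep.reflTransGen_clocked {p q : Q × Shape T} (h : FillStep {τ | τ ∈ R} p q) :
    Relation.ReflTransGen (FillStep {θ | ∃ c, θ ∈ clocked R c})
      ((p.1, 0), p.2) ((q.1, 0), q.2) := by
  obtain ⟨τ, hτ, u, v, rfl, hu, rfl⟩ := h
  obtain ⟨k, hk⟩ := List.mem_iff_getElem?.1 hτ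
  have hlt : k < R.length := (List.getElem?_eq_some_iff.1 hk).1
  exact (reflTransGen_clock hτ (by simp) (by omega)).tail
    ⟨_, ⟨0, mem_clocked_zero.2 ⟨k, τ, hk, rfl⟩⟩, u, v, rfl, hu, rfl⟩

theorem FillStep.of_clocked {p q : (Q × ℕ) × Shape T}
    (h : FillStep {θ | ∃ c, θ ∈ clocked R c} p q) :
    Relation.ReflTransGen (FillStep {τ | τ ∈ R}) (p.1.1, p.2) (q.1.1, q.2) := by
  obtain ⟨θ, ⟨c, hθ⟩, u, v, rfl, hu, rfl⟩ := h
  obtain ⟨τ, hτ, j, rfl | rfl⟩ := eq_of_mem_clocked hθ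
  · exact .single ⟨τ, hτ, u, v, rfl, hu, rfl⟩
  · simp only [Transition.idle, List.append_assoc, List.singleton_append]
    exact .refl

theorem fillLang_clocked (R : List (Transition Q T)) (q₀ : Q) :
    fillLang {θ | ∃ c, θ ∈ clocked R c} (q₀, 0) = fillLang {τ | τ ∈ R} q₀ := by
  refine Set.Subset.antisymm ?_ ?_
  · rintro w ⟨q, hq⟩
    exact ⟨q.1, Relation.ReflTransGen.lift' (fun p : (Q × ℕ) × Shape T => (p.1.1, p.2))
      (fun _ _ => FillStep.of_clocked) _ _ hq⟩
  · rintro w ⟨q, hq⟩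
    exact ⟨(q, 0), Relation.ReflTransGen.lift' (fun p : Q × Shape T => ((p.1, 0), p.2))
      (fun _ _ => FillStep.reflTransGen_clocked) _ _ hq⟩

end ThreeComponents

section Moves

variable {T : Type} {G : CDGS T} {f : Mode} {m : ℕ}

/-- The control information needed to simulate `G`: the component at work with its capped number
of steps, or `none` between two turns, and the nonterminals of the current sentential form. -/
abbrev Control (G : CDGS T) (m : ℕ) := Option (Fin G.deg × Fin (m + 2)) × List ℕ

/-- The transitions simulating derivations of `G` in mode `f`. As the control can only be changed
while there is a hole, a turn ending in a terminal word is checked at its last rule application. -/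
inductive IsMove (G : CDGS T) (f : Mode) (m : ℕ) : Transition (Control G m) T → Prop
  | enter (i : Fin G.deg) {L : List ℕ} (hL : L ≠ []) :
      IsMove G f m (.idle (none, L) (some (i, cap m 0), L))
  | apply {i : Fin G.deg} {r : Rule T} (hr : r ∈ G.comp i) (n : ℕ) (L L' : List ℕ)
      (hok : L ++ nts r.2 ++ L' = [] → modeOK (G.comp i) f (n + 1) []) :
      IsMove G f m ⟨(some (i, cap m n), L ++ r.1 :: L'), L.length, shape r.2,
        (some (i, cap m (n + 1)), L ++ nts r.2 ++ L')⟩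
  | leave {i : Fin G.deg} {n : ℕ} {L : List ℕ} (hL : L ≠ [])
      (hok : modeOK (G.comp i) f n (L.map Sum.inl)) :
      IsMove G f m (.idle (some (i, cap m n), L) (none, L))

/-- The nonterminals that occur in derivations of `G`. -/
def CDGS.alphabet (G : CDGS T) : Finset ℕ :=
  insert G.start (Finset.univ.biUnion fun i => ((G.comp i).flatMap fun r => nts r.2).toFinset)

/-- The possible sequences of nonterminals in derivations of `G` of index at most `m`. -/
def CDGS.labels (G : CDGS T) (m : ℕ) : Set (List ℕ) :=
  {L | L.length ≤ m ∧ ∀ A ∈ L, A ∈ G.alphabet}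

/-- The transitions simulating derivations of `G` in mode `f` of index at most `m`. -/
def moves (G : CDGS T) (f : Mode) (m : ℕ) : Set (Transition (Control G m) T) :=
  {τ | IsMove G f m τ ∧ τ.src.2 ∈ G.labels m ∧ τ.tgt.2 ∈ G.labels m}

theorem CDGS.mem_alphabet {A : ℕ} :
    A ∈ G.alphabet ↔ A = G.start ∨ ∃ i, ∃ r ∈ G.comp i, A ∈ nts r.2 := by
  simp [CDGS.alphabet]

theorem CDGS.finite_labels (G : CDGS T) (m : ℕ) : (G.labels m).Finite := by
  refine ((List.finite_length_le G.alphabet m).image (List.map (↑))).subset ?_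
  rintro L ⟨hlen, hL⟩
  exact ⟨L.attachWith _ hL, by simpa using hlen, List.attachWith_map_subtype_val hL⟩

theorem finite_moves (G : CDGS T) (f : Mode) (m : ℕ) : (moves G f m).Finite := by
  set shapes : Set (Shape T) := insert [none] (⋃ i, (fun r => shape r.2) '' {r | r ∈ G.comp i})
  have hshapes : shapes.Finite :=
    (Set.finite_iUnion fun i => (List.finite_toSet _).image _).insert _
  set states : Set (Control G m) := Set.univ ×ˢ G.labels m
  have hstates : states.Finite := Set.finite_univ.prod (G.finite_labels m)
  refine ((hstates.prod ((Set.finite_le_nat m).prod (hshapes.prod hstates))).image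
    fun t => ⟨t.1, t.2.1, t.2.2.1, t.2.2.2⟩).subset ?_
  rintro τ ⟨hτ, hsrc, htgt⟩
  refine ⟨(τ.src, τ.pos, τ.repl, τ.tgt), ⟨⟨trivial, hsrc⟩, ?_, ?_, ⟨trivial, htgt⟩⟩, rfl⟩
  · cases hτ with
    | enter | leave => exact Nat.zero_le m
    | apply hr n L L' => exact (by simp : L.length ≤ _).trans hsrc.1
  · cases hτ with
    | enter | leave => exact .inl rfl
    | apply hr => exact .inr (Set.mem_iUnion.2 ⟨_, _, hr, rfl⟩)

theorem respects_of_mem_moves {τ : Transition (Control G m) T} (hτ : τ ∈ moves G f m) :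
    τ.Respects (fun s => s.2.length) m := by
  obtain ⟨hτ, hsrc, htgt⟩ := hτ
  refine ⟨?_, ?_, hsrc.1, htgt.1⟩
  · cases hτ with
    | enter _ hL | leave hL => exact List.length_pos_of_ne_nil hL
    | apply => simp
  · cases hτ with
    | enter | leave => rfl
    | apply =>
      simp only [List.append_assoc, List.length_append, List.length_cons, holes_shape]
      omega

theorem repl_ne_nil_of_mem_moves (hG : G.LamFree) {τ : Transition (Control G m) T}
    (hτ : τ ∈ moves G f m) : τ.repl ≠ [] := by
  cases hτ.1 with
  | enter | leave => exact List.cons_ne_nil _ _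
  | apply hr => exact fun h => hG _ _ hr (List.map_eq_nil_iff.1 h)

/-- `y` is derivable in `G`, the last turn being the one described by the first component of a
control state. -/
def Reaches (G : CDGS T) (f : Mode) (m : ℕ) : Option (Fin G.deg × Fin (m + 2)) → SForm T → Prop
  | none, y => Relation.ReflTransGen (G.ModeStep f) [Sum.inl G.start] y
  | some (i, k), y => ∃ y₀ n, Relation.ReflTransGen (G.ModeStep f) [Sum.inl G.start] y₀ ∧
      StepsN (G.comp i) n y₀ y ∧ cap m n = k ∧ (nts y = [] → modeOK (G.comp i) f n y)

theorem Reaches.of_fillStep (hf : IsTurnMode T m f) {p q : Control G m × Shape T}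
    (h : FillStep (moves G f m) p q) {y : SForm T} (hy : Reaches G f m p.1.1 y)
    (hnts : nts y = p.1.2) (hshape : shape y = p.2) :
    ∃ z, Reaches G f m q.1.1 z ∧ nts z = q.1.2 ∧ shape z = q.2 := by
  obtain ⟨τ, ⟨hτ, -, -⟩, u, v, rfl, hu, rfl⟩ := h
  cases hτ with
  | enter i hL =>
    refine ⟨y, ⟨y, 0, hy, rfl, rfl, fun h => absurd (hnts.symm.trans h) hL⟩, hnts, ?_⟩
    simpa [Transition.idle] using hshape
  | apply hr n L L' hok =>
    obtain ⟨y₀, n', hy₀, hsteps, hcap, -⟩ := hy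
    obtain ⟨u', v', rfl, rfl, rfl, rfl, rfl⟩ := exists_eq_append_inl_cons hshape hnts hu
    refine ⟨u' ++ _ ++ v', ⟨y₀, n' + 1, hy₀, hsteps.snoc ⟨_, hr, u', v', rfl, rfl⟩,
      cap_succ_congr hcap, fun h => ?_⟩, by simp, by simp⟩
    exact hf.congr (y := []) _ (cap_succ_congr hcap).symm h.symm (hok (by simpa using h))
  | leave hL hok =>
    obtain ⟨y₀, n', hy₀, hsteps, hcap, -⟩ := hy
    refine ⟨y, hy₀.tail ⟨_, n', hsteps, ?_⟩, hnts, by simpa [Transition.idle] using hshape⟩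
    exact hf.congr _ hcap.symm ((nts_map_inl _).trans hnts.symm) hok

theorem fillLang_moves_subset_lang (hf : IsTurnMode T m f) :
    fillLang (moves G f m) (none, [G.start]) ⊆ G.lang f := by
  have hderiv : ∀ p, Relation.ReflTransGen (FillStep (moves G f m)) ((none, [G.start]), [none]) p →
      ∃ y, Reaches G f m p.1.1 y ∧ nts y = p.1.2 ∧ shape y = p.2 := fun p h => by
    induction h with
    | refl => exact ⟨[Sum.inl G.start], .refl, rfl, rfl⟩
    | tail _ hstep ih =>
      obtain ⟨y, hy, hnts, hshape⟩ := ih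
      exact hy.of_fillStep hf hstep hnts hshape
  rintro w ⟨⟨c, L⟩, hw⟩
  obtain ⟨y, hy, -, hshape⟩ := hderiv _ hw
  obtain rfl := eq_map_inr_of_shape_eq hshape
  refine transGen_map_inr_iff.2 ?_
  match c, hy with
  | none, hy => exact hy
  | some (i, _), ⟨y₀, n, hy₀, hsteps, _, hok⟩ => exact hy₀.tail ⟨i, n, hsteps, hok (nts_map_inr w)⟩

theorem nts_mem_labels_of_rStep {i : Fin G.deg} {y z : SForm T} (h : RStep (G.comp i) y z)
    (hy : nts y ∈ G.labels m) (hz : ntCount z ≤ m) : nts z ∈ G.labels m := by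
  refine ⟨(length_nts z).trans_le hz, ?_⟩
  obtain ⟨r, hr, u, v, rfl, rfl⟩ := h
  intro A hA
  simp only [nts_append, List.mem_append] at hA
  rcases hA with (hA | hA) | hA
  · exact hy.2 A (by simp [hA])
  · exact CDGS.mem_alphabet.2 (.inr ⟨i, r, hr, hA⟩)
  · exact hy.2 A (by simp [hA])

theorem fillStep_of_rStep {i : Fin G.deg} {n : ℕ} {y z : SForm T} (h : RStep (G.comp i) y z)
    (hy : nts y ∈ G.labels m) (hz : nts z ∈ G.labels m)
    (hok : nts z = [] → modeOK (G.comp i) f (n + 1) ([] : SForm T)) :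
    FillStep (moves G f m) ((some (i, cap m n), nts y), shape y)
      ((some (i, cap m (n + 1)), nts z), shape z) := by
  obtain ⟨r, hr, u, v, rfl, rfl⟩ := h
  simp only [nts_append, nts_inl_cons] at hy hz hok ⊢
  exact ⟨_, ⟨.apply hr n (nts u) (nts v) hok, hy, hz⟩, shape u, shape v, by simp, holes_shape u,
    by simp⟩

theorem reflTransGen_of_stepsNB (hf : IsTurnMode T m f) {i : Fin G.deg} {z : SForm T} :
    ∀ {n n₀ y}, StepsNB (G.comp i) m n y z → modeOK (G.comp i) f (n₀ + n) z →
      nts y ∈ G.labels m → nts z ∈ G.labels m ∧ Relation.ReflTransGen (FillStep (moves G f m))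
        ((some (i, cap m n₀), nts y), shape y) ((some (i, cap m (n₀ + n)), nts z), shape z)
  | 0, _, _, rfl, _, hy => ⟨hy, .refl⟩
  | n + 1, n₀, y, ⟨y', hyy', hy'm, hy'z⟩, hok, hy => by
    have hy' := nts_mem_labels_of_rStep hyy' hy hy'm
    rw [← Nat.add_assoc, Nat.add_right_comm] at hok ⊢
    obtain ⟨hz, hderiv⟩ := reflTransGen_of_stepsNB hf hy'z hok hy'
    refine ⟨hz, hderiv.head (fillStep_of_rStep hyy' hy hy' fun hnil => ?_)⟩
    obtain ⟨rfl, rfl⟩ := hy'z.eq_of_nts_eq_nil hnil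
    exact hf.congr (y' := []) _ rfl hnil hok

theorem reflTransGen_of_modeStepB (hf : IsTurnMode T m f) {y z : SForm T}
    (h : G.ModeStepB f m y z) (hy : nts y ∈ G.labels m) (hne : nts y ≠ []) :
    nts z ∈ G.labels m ∧ ∃ c, (c = none ∨ nts z = []) ∧
      Relation.ReflTransGen (FillStep (moves G f m))
        ((none, nts y), shape y) ((c, nts z), shape z) := by
  obtain ⟨i, n, hsteps, hok⟩ := h
  have hidle : ∀ {y : SForm T} {c c'}, nts y ≠ [] → nts y ∈ G.labels m →
      IsMove G f m (.idle (c, nts y) (c', nts y)) →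
        FillStep (moves G f m) ((c, nts y), shape y) ((c', nts y), shape y) :=
    fun hne hy hmove => .idle ⟨hmove, hy, hy⟩ (by rwa [holes_shape, List.length_pos_iff])
  obtain ⟨hz, hderiv⟩ := reflTransGen_of_stepsNB hf (n₀ := 0) hsteps (by rwa [zero_add]) hy
  have hderiv := hderiv.head (hidle hne hy (.enter i hne))
  refine ⟨hz, ?_⟩
  by_cases hnz : nts z = []
  · exact ⟨_, .inr hnz, hderiv⟩
  · have hleave : modeOK (G.comp i) f (0 + n) ((nts z).map Sum.inl) :=
      hf.congr _ (congrArg _ (zero_add n).symm) (nts_map_inl _).symm hok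
    exact ⟨none, .inl rfl, hderiv.tail (hidle hnz hz (.leave hnz hleave))⟩

theorem langB_subset_fillLang_moves (hf : IsTurnMode T m f) :
    G.langB f m ⊆ fillLang (moves G f m) (none, [G.start]) := by
  rintro w ⟨hm, hw⟩
  have hderiv : ∀ z, Relation.ReflTransGen (G.ModeStepB f m) [Sum.inl G.start] z →
      nts z ∈ G.labels m ∧ ∃ c, (c = none ∨ nts z = []) ∧ Relation.ReflTransGen
        (FillStep (moves G f m)) ((none, [G.start]), [none]) ((c, nts z), shape z) := fun z h => by
    induction h with
    | refl =>
      exact ⟨⟨hm, by simp [CDGS.mem_alphabet]⟩, none, .inl rfl, .refl⟩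
    | @tail y z _ hstep ih =>
      obtain ⟨hy, c, hc, hderiv⟩ := ih
      by_cases hne : nts y = []
      · obtain ⟨i, n, hsteps, -⟩ := hstep
        obtain ⟨-, rfl⟩ := hsteps.eq_of_nts_eq_nil hne
        exact ⟨hy, c, hc, hderiv⟩
      · obtain rfl := hc.resolve_right hne
        obtain ⟨hz, c, hc, hderiv'⟩ := reflTransGen_of_modeStepB hf hstep hy hne
        exact ⟨hz, c, hc, hderiv.trans hderiv'⟩
  obtain ⟨-, c, -, hderiv⟩ := hderiv _ (transGen_map_inr_iff.1 hw)
  exact ⟨_, shape_map_inr w ▸ hderiv⟩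

end Moves

section Families

variable {T : Type} {k m : ℕ} {f : Mode}

theorem CDFamIndInf_eq_CDFamInd {lf : Bool}
    (h : ∀ G : CDGS T, G.lang f ⊆ G.langB f m → ∃ G' : CDGS T, G'.deg ≤ k ∧
      (G.LamFree → G'.LamFree) ∧ G'.lang f = G.lang f ∧ G.lang f ⊆ G'.langB f m) :
    CDFamIndInf T lf f m = CDFamInd T lf k f m := by
  refine Set.Subset.antisymm ?_ fun L ⟨G, _, hG⟩ => ⟨G, hG⟩
  rintro L ⟨G, hlf, hL, hind⟩
  obtain ⟨G', hdeg, hfree, hlang, hind'⟩ := h G hind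
  exact ⟨G', hdeg, fun hl => hfree (hlf hl), hlang ▸ hL, hlang ▸ hind'⟩

theorem CDFamIndInf_le_eq (lf : Bool) (hk : 1 ≤ k) (hm : 1 ≤ m) :
    CDFamIndInf T lf (.le m) m = CDFamInd T lf k (.le m) m :=
  CDFamIndInf_eq_CDFamInd fun G hind => ⟨G.merge, hk, CDGS.LamFree.merge, G.lang_merge_le hm,
    hind.trans G.langB_le_subset_langB_merge⟩

theorem IsTurnMode.CDFamIndInf_eq (hf : IsTurnMode T m f) (lf : Bool) (hm : 1 ≤ m) :
    CDFamIndInf T lf f m = CDFamInd T lf 3 f m := by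
  refine CDFamIndInf_eq_CDFamInd fun G hind => ?_
  obtain ⟨R, hR⟩ : ∃ R : List (Transition (Control G m) T), {τ | τ ∈ R} = moves G f m :=
    ⟨(finite_moves G f m).toFinset.toList, by simp⟩
  have hmem : ∀ τ, τ ∈ R ↔ τ ∈ moves G f m := fun τ => Set.ext_iff.1 hR τ
  have hwidth : ∀ c, ∀ θ ∈ clocked R c, θ.Respects (fun q => q.1.2.length) m := fun _ _ =>
    respects_of_mem_clocked fun τ hτ => respects_of_mem_moves ((hmem τ).1 hτ)
  have hfill : fillLang {θ | ∃ c, θ ∈ clocked R c} ((none, [G.start]), 0) = G.lang f := by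
    rw [fillLang_clocked, hR]
    exact (fillLang_moves_subset_lang hf).antisymm (hind.trans (langB_subset_fillLang_moves hf))
  set G' := fillGrammar (fun q => q.1.2.length) m (clocked R) ((none, [G.start]), 0)
  have hlang : G'.lang f ⊆ G.lang f :=
    (fillGrammar.lang_subset_fillLang hf oneShot_clocked hwidth rfl).trans hfill.subset
  have hlangB : G.lang f ⊆ G'.langB f m :=
    hfill.superset.trans (fillGrammar.fillLang_subset_langB hf oneShot_clocked hwidth rfl hm)
  exact ⟨G', le_rfl, fun hG => fillGrammar.lamFree fun _ _ => repl_ne_nil_of_mem_clocked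
    fun τ hτ => repl_ne_nil_of_mem_moves hG ((hmem τ).1 hτ),
    hlang.antisymm (hlangB.trans (CDGS.langB_subset_lang _ _ _)), hlangB⟩

end Families

theorem stmt16_general {T : Type} (lf : Bool) (m : ℕ) (hm : 1 ≤ m) (d : ℕ → Mode)
    (hd : d = Mode.le ∨ d = Mode.eq ∨ d = Mode.ge) :
    CDFamIndInf T lf (d m) m = CDFamInd T lf 3 (d m) m ∧
    CDFamIndInf T lf (Mode.conj Mode.t (d m)) m =
      CDFamInd T lf 3 (Mode.conj Mode.t (d m)) m := by
  refine ⟨?_, (isTurnMode_conj_t T m hd).CDFamIndInf_eq lf hm⟩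
  rcases hd with rfl | rfl | rfl
  · exact CDFamIndInf_le_eq lf (by norm_num) hm
  · exact (isTurnMode_eq T m).CDFamIndInf_eq lf hm
  · exact (isTurnMode_ge T m).CDFamIndInf_eq lf hm

/-- For every m ∈ ℕ (positive) and every Δ ∈ {≤, =, ≥}, three
components suffice under the index-m restriction:
L_m(CD_∞, CF[−λ], Δm) = L_m(CD_3, CF[−λ], Δm) and
L_m(CD_∞, CF[−λ], (t∧Δm)) = L_m(CD_3, CF[−λ], (t∧Δm)),
both with and without erasing rules. -/
theorem stmt16 (lf : Bool) (m : ℕ) (hm : 1 ≤ m) (d : ℕ → Mode)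
    (hd : d = Mode.le ∨ d = Mode.eq ∨ d = Mode.ge) :
    CDFamIndInf ℕ lf (d m) m = CDFamInd ℕ lf 3 (d m) m ∧
    CDFamIndInf ℕ lf (Mode.conj Mode.t (d m)) m =
      CDFamInd ℕ lf 3 (Mode.conj Mode.t (d m)) m := by
  exact stmt16_general lf m hm d hd

end CDHybrid
end

section
/- For every m ∈ ℕ, the family of languages of index at most m generated by CD grammar systems with at most three context-free components working in the (t∧=m)-mode is strictly contained in the unrestricted family: L_m(CD_3, CF[−λ], (t∧=m)) ⊊ L(CD_3, CF[−λ], (t∧=m)), both with and without erasing rules. -/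
namespace CDHybrid

/-! Cut a derivation of index at most `m` where the number of occurrences of some letter first
exceeds a constant `M`. Whether a mode step is possible depends only on the nonterminals present,
so there are finitely many situations up to terminals, and the rest of the derivation can be
exchanged for one that fills the nonterminals with at most `M` letters in all. Since the exchanged
word is in the language as well, letters that occur equally often in each of its words occur almost
equally often in the sentential form. Hence all letters of a group, which are tied to each other,
are already present while each of them is still to be completed. But in a sorted word a letter can
lie both inside and outside the `m` words filled into the form only if it is at one of their
`2 * m` ends, and one of these ends is taken by the other group.

The witness has two such groups of `2 * m` letters, and its sentential forms have `2 * m`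
nonterminals, called slots. The condition `t ∧ = m` makes a component rewrite the `m` slots of a
group together: the component of a group wakes them, and the third one, shared by the groups, has
to put them back to rest or to finish them before it can serve the other group. -/

/-! ### Skeletons, terminals and fillings -/

section SententialForms

variable {T : Type}

/-- The word of nonterminals of a sentential form: what is left after erasing the terminals. -/
def skeleton (x : SForm T) : List ℕ := x.filterMap Sum.getLeft?

/-- The word of terminals of a sentential form: what is left after erasing the nonterminals. -/
def terminals (x : SForm T) : List T := x.filterMap Sum.getRight?

/-- Replace the successive nonterminal occurrences of a sentential form by the given terminal words.
Nonterminals beyond the length of the list of words are erased. -/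
def fill : SForm T → List (List T) → List T
  | [], _ => []
  | Sum.inr a :: x, vs => a :: fill x vs
  | Sum.inl _ :: x, [] => fill x []
  | Sum.inl _ :: x, v :: vs => v ++ fill x vs

@[simp] theorem skeleton_nil : skeleton ([] : SForm T) = [] := rfl

@[simp] theorem skeleton_inl_cons (A : ℕ) (x : SForm T) :
    skeleton (Sum.inl A :: x) = A :: skeleton x := by simp [skeleton]

@[simp] theorem skeleton_inr_cons (a : T) (x : SForm T) :
    skeleton (Sum.inr a :: x) = skeleton x := rfl

@[simp] theorem skeleton_append (x y : SForm T) :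
    skeleton (x ++ y) = skeleton x ++ skeleton y := by simp [skeleton]

@[simp] theorem skeleton_map_inr (w : List T) : skeleton (w.map Sum.inr) = [] := by
  simp [skeleton]

@[simp] theorem terminals_nil : terminals ([] : SForm T) = [] := rfl

@[simp] theorem terminals_inl_cons (A : ℕ) (x : SForm T) :
    terminals (Sum.inl A :: x) = terminals x := rfl

@[simp] theorem terminals_inr_cons (a : T) (x : SForm T) :
    terminals (Sum.inr a :: x) = a :: terminals x := by simp [terminals]

@[simp] theorem terminals_append (x y : SForm T) :
    terminals (x ++ y) = terminals x ++ terminals y := by simp [terminals]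

@[simp] theorem terminals_map_inr (w : List T) : terminals (w.map Sum.inr) = w := by
  induction w with
  | nil => rfl
  | cons a w ih => simp [ih]

theorem ntCount_eq_length_skeleton (x : SForm T) : ntCount x = (skeleton x).length := by
  induction x with
  | nil => rfl
  | cons s x ih => cases s <;> simpa [ntCount, List.filter_cons] using ih

theorem exists_eq_append_of_skeleton_eq {x : SForm T} {p q : List ℕ} {A : ℕ}
    (h : skeleton x = p ++ A :: q) :
    ∃ u v, x = u ++ Sum.inl A :: v ∧ skeleton u = p ∧ skeleton v = q := by
  obtain ⟨u, v', rfl, rfl, hv'⟩ := List.filterMap_eq_append_iff.1 h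
  obtain ⟨u', s, v, rfl, hu', hs, rfl⟩ := List.filterMap_eq_cons_iff.1 hv'
  obtain rfl : s = Sum.inl A := by simpa using hs
  have hu' : skeleton u' = [] := List.filterMap_eq_nil_iff.2 hu'
  have hu : skeleton (u ++ u') = skeleton u := by rw [skeleton_append, hu', List.append_nil]
  exact ⟨u ++ u', v, (List.append_assoc ..).symm, hu, rfl⟩

theorem fill_append (x y : SForm T) {us vs : List (List T)}
    (h : us.length = (skeleton x).length) :
    fill (x ++ y) (us ++ vs) = fill x us ++ fill y vs := by
  induction x generalizing us with
  | nil => simp_all [fill]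
  | cons s x ih =>
    cases s with
    | inr a => simp [fill, ih (by simpa using h)]
    | inl A =>
      cases us with
      | nil => simp at h
      | cons v us => simp [fill, ih (by simpa using h)]

theorem fill_map_inr (w : List T) : fill (w.map Sum.inr) [] = w := by
  induction w with
  | nil => rfl
  | cons a w ih => simp [fill, ih]

theorem map_inr_fill_nil {x : SForm T} (h : skeleton x = []) : (fill x []).map Sum.inr = x := by
  induction x with
  | nil => rfl
  | cons s x ih =>
    cases s with
    | inl A => simp at h
    | inr a => simp [fill, ih (by simpa using h)]

theorem terminals_sublist_fill (x : SForm T) (vs : List (List T)) :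
    (terminals x).Sublist (fill x vs) := by
  induction x generalizing vs with
  | nil => simp
  | cons s x ih =>
    cases s with
    | inr a => simpa [fill] using ih vs
    | inl A =>
      cases vs with
      | nil => exact ih []
      | cons v vs => exact (ih vs).trans (List.sublist_append_right _ _)

theorem flatten_sublist_fill {x : SForm T} {vs : List (List T)}
    (h : vs.length = (skeleton x).length) : vs.flatten.Sublist (fill x vs) := by
  induction x generalizing vs with
  | nil => simp_all
  | cons s x ih =>
    cases s with
    | inr a => exact (ih (by simpa using h)).cons _
    | inl A =>
      cases vs with
      | nil => simp
      | cons v vs => exact (ih (by simpa using h)).append_left v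

theorem count_fill [DecidableEq T] {x : SForm T} {vs : List (List T)}
    (h : vs.length = (skeleton x).length) (a : T) :
    (fill x vs).count a = (terminals x).count a + vs.flatten.count a := by
  induction x generalizing vs with
  | nil => simp_all [fill]
  | cons s x ih =>
    cases s with
    | inr b =>
      simp only [fill, terminals_inr_cons, List.count_cons, ih (by simpa using h)]
      omega
    | inl A =>
      cases vs with
      | nil => simp at h
      | cons v vs =>
        simp only [fill, terminals_inl_cons, List.flatten_cons, List.count_append,
          ih (by simpa using h)]
        omega

end SententialForms

/-! ### Context-free relations and short completions -/

section ContextFree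

variable {T : Type}

/-- A relation on sentential forms is context-free if each of its steps can be repeated, with the
same contributions of the nonterminals, on every sentential form with the same skeleton: any
filling of the target comes from a filling of the source, uniformly in the terminals around. -/
def ContextFree (R : SForm T → SForm T → Prop) : Prop :=
  ∀ ⦃x y⦄, R x y → ∀ vs : List (List T), vs.length = (skeleton y).length →
    ∃ us : List (List T), us.length = (skeleton x).length ∧ fill x us = fill y vs ∧
      ∀ x', skeleton x' = skeleton x →
        ∃ y', R x' y' ∧ skeleton y' = skeleton y ∧ fill x' us = fill y' vs

theorem contextFree_eq : ContextFree (Eq : SForm T → SForm T → Prop) := by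
  rintro x _ rfl vs hvs
  exact ⟨vs, hvs, rfl, fun x' hx' => ⟨x', rfl, hx', rfl⟩⟩

theorem ContextFree.comp {R S : SForm T → SForm T → Prop} (hR : ContextFree R)
    (hS : ContextFree S) : ContextFree (Relation.Comp R S) := by
  rintro x y ⟨z, hxz, hzy⟩ ws hws
  obtain ⟨vs, hvs, hfill_z, replay_z⟩ := hS hzy ws hws
  obtain ⟨us, hus, hfill_x, replay_x⟩ := hR hxz vs hvs
  refine ⟨us, hus, hfill_x.trans hfill_z, fun x' hx' => ?_⟩
  obtain ⟨z', hxz', hz', hfill_x'⟩ := replay_x x' hx'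
  obtain ⟨y', hzy', hy', hfill_z'⟩ := replay_z z' hz'
  exact ⟨y', ⟨z', hxz', hzy'⟩, hy', hfill_x'.trans hfill_z'⟩

theorem ContextFree.reflTransGen {R : SForm T → SForm T → Prop} (hR : ContextFree R) :
    ContextFree (Relation.ReflTransGen R) := by
  intro x y hxy vs hvs
  induction hxy using Relation.ReflTransGen.head_induction_on with
  | refl => exact ⟨vs, hvs, rfl, fun x' hx' => ⟨x', .refl, hx', rfl⟩⟩
  | head hxz _ ih =>
    obtain ⟨us, hus, hfill_z, replay_z⟩ := ih
    obtain ⟨ts, hts, hfill_x, replay_x⟩ := hR hxz us hus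
    refine ⟨ts, hts, hfill_x.trans hfill_z, fun x' hx' => ?_⟩
    obtain ⟨z', hxz', hz', hfill_x'⟩ := replay_x x' hx'
    obtain ⟨y', hzy', hy', hfill_z'⟩ := replay_z z' hz'
    exact ⟨y', hzy'.head hxz', hy', hfill_x'.trans hfill_z'⟩

theorem contextFree_rStep (P : List (Rule T)) : ContextFree (RStep P) := by
  rintro _ _ ⟨⟨A, z⟩, hr, u, v, rfl, rfl⟩ vs hvs
  simp only [skeleton_append, List.length_append] at hvs
  obtain ⟨us, ws', rfl, hus⟩ : ∃ us ws, vs = us ++ ws ∧ us.length = (skeleton u).length :=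
    ⟨vs.take (skeleton u).length, vs.drop _, (List.take_append_drop ..).symm,
      List.length_take_of_le (by omega)⟩
  rw [List.length_append] at hvs
  obtain ⟨zs, ws, rfl, hzs⟩ : ∃ zs ws, ws' = zs ++ ws ∧ zs.length = (skeleton z).length :=
    ⟨ws'.take (skeleton z).length, ws'.drop _, (List.take_append_drop ..).symm,
      List.length_take_of_le (by omega)⟩
  have fill_eq (u' v' : SForm T) (hu' : skeleton u' = skeleton u) :
      fill (u' ++ Sum.inl A :: v') (us ++ fill z zs :: ws) =
        fill (u' ++ z ++ v') (us ++ (zs ++ ws)) := by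
    rw [← hu'] at hus
    rw [List.append_assoc, fill_append _ _ hus, fill_append _ _ hus, fill_append _ _ hzs, fill]
  rw [List.length_append] at hvs
  have hlength : (us ++ fill z zs :: ws).length = (skeleton (u ++ Sum.inl A :: v)).length := by
    simp only [skeleton_append, skeleton_inl_cons, List.length_append, List.length_cons]
    omega
  refine ⟨us ++ fill z zs :: ws, hlength, fill_eq u v rfl, fun x' hx' => ?_⟩
  rw [skeleton_append, skeleton_inl_cons] at hx'
  obtain ⟨u', v', rfl, hu', hv'⟩ := exists_eq_append_of_skeleton_eq hx'
  exact ⟨u' ++ z ++ v', ⟨_, hr, u', v', rfl, rfl⟩, by simp [hu', hv'], fill_eq u' v' hu'⟩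

theorem contextFree_stepsN (P : List (Rule T)) : ∀ k, ContextFree (StepsN P k)
  | 0 => contextFree_eq
  | k + 1 => (contextFree_rStep P).comp (contextFree_stepsN P k)

theorem ContextFree.exists_step {R : SForm T → SForm T → Prop} (hR : ContextFree R)
    {x x' : SForm T} (h : skeleton x' = skeleton x) (hx : ∃ y, R x y) : ∃ y, R x' y := by
  obtain ⟨y, hxy⟩ := hx
  obtain ⟨_, _, _, replay⟩ := hR hxy (List.replicate _ []) List.length_replicate
  obtain ⟨y', hxy', _⟩ := replay x' h
  exact ⟨y', hxy'⟩

theorem modeOK_congr {P : List (Rule T)} {x y : SForm T} (h : skeleton x = skeleton y)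
    (f : Mode) (k : ℕ) : modeOK P f k x ↔ modeOK P f k y := by
  induction f with
  | t =>
    exact not_congr ⟨(contextFree_rStep P).exists_step h.symm, (contextFree_rStep P).exists_step h⟩
  | conj f g hf hg => exact and_congr hf hg
  | _ => exact Iff.rfl

theorem CDGS.contextFree_modeStep (G : CDGS T) (f : Mode) : ContextFree (G.ModeStep f) := by
  rintro x y ⟨i, k, hxy, hf⟩ vs hvs
  obtain ⟨us, hus, hfill, replay⟩ := contextFree_stepsN _ k hxy vs hvs
  refine ⟨us, hus, hfill, fun x' hx' => ?_⟩
  obtain ⟨y', hxy', hy', hfill'⟩ := replay x' hx'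
  exact ⟨y', ⟨i, k, hxy', (modeOK_congr hy' f k).2 hf⟩, hy', hfill'⟩

theorem ContextFree.exists_fill {R : SForm T → SForm T → Prop} (hR : ContextFree R)
    {x : SForm T} {w : List T} (h : Relation.ReflTransGen R x (w.map Sum.inr)) :
    ∃ vs : List (List T), vs.length = (skeleton x).length ∧ fill x vs = w ∧
      ∀ x', skeleton x' = skeleton x →
        Relation.ReflTransGen R x' ((fill x' vs).map Sum.inr) := by
  obtain ⟨vs, hvs, hfill, replay⟩ := hR.reflTransGen h [] (by simp)
  refine ⟨vs, hvs, hfill.trans (fill_map_inr w), fun x' hx' => ?_⟩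
  obtain ⟨y', hxy', hy', hfill'⟩ := replay x' hx'
  rwa [hfill', map_inr_fill_nil (hy'.trans (skeleton_map_inr w))]

theorem ContextFree.exists_short_fill {R : SForm T → SForm T → Prop} (hR : ContextFree R)
    {K : Set (List ℕ)} (hK : K.Finite) :
    ∃ M, ∀ x (w : List T), skeleton x ∈ K → Relation.ReflTransGen R x (w.map Sum.inr) →
      ∃ vs : List (List T), vs.length = (skeleton x).length ∧ vs.flatten.length ≤ M ∧
        Relation.ReflTransGen R x ((fill x vs).map Sum.inr) := by
  have bound_of_skeleton (s : List ℕ) : ∃ M, ∀ x (w : List T), skeleton x = s →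
      Relation.ReflTransGen R x (w.map Sum.inr) →
      ∃ vs : List (List T), vs.length = (skeleton x).length ∧ vs.flatten.length ≤ M ∧
        Relation.ReflTransGen R x ((fill x vs).map Sum.inr) := by
    by_cases h : ∃ x, ∃ w : List T, skeleton x = s ∧ Relation.ReflTransGen R x (w.map Sum.inr)
    · obtain ⟨x, w, rfl, hxw⟩ := h
      obtain ⟨vs, hvs, -, replay⟩ := hR.exists_fill hxw
      exact ⟨_, fun x' _ hx' _ => ⟨vs, hx' ▸ hvs, le_rfl, replay x' hx'⟩⟩
    · exact ⟨0, fun x w hx hxw => absurd ⟨x, w, hx, hxw⟩ h⟩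
  choose M hM using bound_of_skeleton
  obtain ⟨N, hN⟩ := (hK.image M).bddAbove
  refine ⟨N, fun x w hx hxw => ?_⟩
  obtain ⟨vs, hvs, hle, hfill⟩ := hM _ x w rfl hxw
  exact ⟨vs, hvs, hle.trans (hN ⟨_, hx, rfl⟩), hfill⟩

end ContextFree

/-! ### Sorted fillings -/

section Sorted

variable {T : Type} [LinearOrder T]

/-- The first and last letters of the words of a list. -/
def endLetters (vs : List (List T)) : Finset T :=
  (vs.filterMap List.head? ++ vs.filterMap List.getLast?).toFinset

theorem mem_endLetters {vs : List (List T)} {a : T} :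
    a ∈ endLetters vs ↔ ∃ v ∈ vs, v.head? = some a ∨ v.getLast? = some a := by
  simp [endLetters, and_or_left, exists_or]

theorem card_endLetters_le (vs : List (List T)) : (endLetters vs).card ≤ 2 * vs.length := by
  have h := List.toFinset_card_le (vs.filterMap List.head? ++ vs.filterMap List.getLast?)
  have hhead := List.length_filterMap_le List.head? vs
  have hlast := List.length_filterMap_le List.getLast? vs
  rw [List.length_append] at h
  exact h.trans (by omega)

theorem exists_head?_le {v : List T} (hv : v.Pairwise (· ≤ ·)) {a : T} (ha : a ∈ v) :
    ∃ e, v.head? = some e ∧ e ∈ v ∧ e ≤ a := by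
  cases v with
  | nil => simp at ha
  | cons e v =>
    refine ⟨e, rfl, List.mem_cons_self, ?_⟩
    rcases List.mem_cons.1 ha with rfl | ha
    · exact le_rfl
    · exact List.rel_of_pairwise_cons hv ha

theorem exists_getLast?_ge {v : List T} (hv : v.Pairwise (· ≤ ·)) {a : T} (ha : a ∈ v) :
    ∃ e, v.getLast? = some e ∧ e ∈ v ∧ a ≤ e := by
  obtain ⟨e, he, hev, hae⟩ := exists_head?_le (T := Tᵒᵈ) (v := v.reverse)
    (List.pairwise_reverse.2 hv) (List.mem_reverse.2 ha)
  exact ⟨e, List.head?_reverse.symm.trans he, List.mem_reverse.1 hev, hae⟩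

theorem exists_mem_endLetters_le {vs : List (List T)} (hvs : vs.flatten.Pairwise (· ≤ ·)) {a : T}
    (ha : a ∈ vs.flatten) : ∃ e ∈ endLetters vs, e ≤ a := by
  obtain ⟨v, hv, hav⟩ := List.mem_flatten.1 ha
  obtain ⟨e, he, -, hea⟩ := exists_head?_le ((List.pairwise_flatten.1 hvs).1 v hv) hav
  exact ⟨e, mem_endLetters.2 ⟨v, hv, .inl he⟩, hea⟩

theorem exists_mem_endLetters_ge {vs : List (List T)} (hvs : vs.flatten.Pairwise (· ≤ ·)) {a : T}
    (ha : a ∈ vs.flatten) : ∃ e ∈ endLetters vs, a ≤ e := by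
  obtain ⟨v, hv, hav⟩ := List.mem_flatten.1 ha
  obtain ⟨e, he, -, hae⟩ := exists_getLast?_ge ((List.pairwise_flatten.1 hvs).1 v hv) hav
  exact ⟨e, mem_endLetters.2 ⟨v, hv, .inr he⟩, hae⟩

-- A letter outside the filled words bounds each of them from one side, so in a sorted word it can
-- recur inside a filled word only at one of its two ends.
theorem mem_endLetters_of_mem_terminals {x : SForm T} {vs : List (List T)}
    (hvs : vs.length = (skeleton x).length) (hsorted : (fill x vs).Pairwise (· ≤ ·)) {a : T}
    (hx : a ∈ terminals x) (ha : a ∈ vs.flatten) : a ∈ endLetters vs := by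
  rw [mem_endLetters]
  induction x generalizing vs with
  | nil => simp at hx
  | cons s x ih =>
    cases s with
    | inr b =>
      obtain ⟨hb, hsorted⟩ := List.pairwise_cons.1 hsorted
      replace hvs : vs.length = (skeleton x).length := hvs
      rw [terminals_inr_cons, List.mem_cons] at hx
      rcases hx with hab | hx
      · obtain ⟨v, hv, hav⟩ := List.mem_flatten.1 ha
        have hsub := flatten_sublist_fill hvs
        obtain ⟨e, he, hev, hea⟩ :=
          exists_head?_le ((List.pairwise_flatten.1 (hsorted.sublist hsub)).1 v hv) hav
        have hae : a ≤ e := hab ▸ hb e (hsub.subset (List.mem_flatten_of_mem hv hev))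
        exact ⟨v, hv, .inl (hea.antisymm hae ▸ he)⟩
      · exact ih hvs hsorted hx ha
    | inl A =>
      cases vs with
      | nil => simp at ha
      | cons v vs =>
        obtain ⟨hv, hsorted, hle⟩ := List.pairwise_append.1 hsorted
        rw [List.flatten_cons, List.mem_append] at ha
        rcases ha with ha | ha
        · obtain ⟨e, he, hev, hae⟩ := exists_getLast?_ge hv ha
          have hea : e ≤ a := hle e hev a ((terminals_sublist_fill x vs).subset hx)
          exact ⟨v, List.mem_cons_self, .inr (hea.antisymm hae ▸ he)⟩
        · obtain ⟨v', hv', h⟩ := ih (by simpa using hvs) hsorted hx ha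
          exact ⟨v', List.mem_cons_of_mem v hv', h⟩

theorem card_lt_of_forall_mem_terminals {x : SForm T} {vs : List (List T)}
    (hvs : vs.length = (skeleton x).length) (hsorted : (fill x vs).Pairwise (· ≤ ·))
    {X : Finset T} (hX : ∀ a ∈ X, a ∈ terminals x ∧ a ∈ vs.flatten) {c : T} (hc : c ∈ vs.flatten)
    (hXc : (∀ a ∈ X, a < c) ∨ ∀ a ∈ X, c < a) : X.card < 2 * vs.length := by
  have hflat := hsorted.sublist (flatten_sublist_fill hvs)
  have hsub : X ⊆ endLetters vs := fun a ha =>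
    mem_endLetters_of_mem_terminals hvs hsorted (hX a ha).1 (hX a ha).2
  obtain ⟨e, he, heX⟩ : ∃ e ∈ endLetters vs, e ∉ X := by
    rcases hXc with hXc | hXc
    · obtain ⟨e, he, hce⟩ := exists_mem_endLetters_ge hflat hc
      exact ⟨e, he, fun h => (hXc e h).not_ge hce⟩
    · obtain ⟨e, he, hec⟩ := exists_mem_endLetters_le hflat hc
      exact ⟨e, he, fun h => (hXc e h).not_ge hec⟩
  have hss : X ⊂ endLetters vs := (Finset.ssubset_iff_of_subset hsub).2 ⟨e, he, heX⟩
  exact (Finset.card_lt_card hss).trans_le (card_endLetters_le vs)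

end Sorted

/-! ### Derivations of bounded index -/

section BoundedIndex

variable {T : Type}

theorem StepsNB.stepsN_s17 {P : List (Rule T)} {b k : ℕ} {x y : SForm T} (h : StepsNB P b k x y) :
    StepsN P k x y := by
  induction k generalizing x with
  | zero => exact h
  | succ k ih =>
    obtain ⟨z, hxz, -, hzy⟩ := h
    exact ⟨z, hxz, ih hzy⟩

theorem StepsNB.ntCount_le {P : List (Rule T)} {b k : ℕ} {x y : SForm T} (h : StepsNB P b k x y)
    (hx : ntCount x ≤ b) : ntCount y ≤ b := by
  induction k generalizing x with
  | zero => exact (show x = y from h) ▸ hx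
  | succ k ih =>
    obtain ⟨z, -, hz, hzy⟩ := h
    exact ih hzy hz

theorem StepsN.reflTransGen {P : List (Rule T)} {k : ℕ} {x y : SForm T} (h : StepsN P k x y) :
    Relation.ReflTransGen (RStep P) x y := by
  induction k generalizing x with
  | zero => exact (show x = y from h) ▸ .refl
  | succ k ih =>
    obtain ⟨z, hxz, hzy⟩ := h
    exact (ih hzy).head hxz

theorem StepsN.count_terminals_le [DecidableEq T] {P : List (Rule T)} {C : ℕ}
    (hC : ∀ r ∈ P, r.2.length ≤ C) (a : T) {k : ℕ} {x y : SForm T} (h : StepsN P k x y) :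
    (terminals y).count a ≤ (terminals x).count a + k * C := by
  induction k generalizing x with
  | zero => rw [show x = y from h, Nat.zero_mul, Nat.add_zero]
  | succ k ih =>
    obtain ⟨_, ⟨r, hr, u, v, rfl, rfl⟩, hzy⟩ := h
    have hstep := ih hzy
    have hrule : (terminals r.2).count a ≤ C :=
      (List.count_le_length.trans (List.length_filterMap_le _ _)).trans (hC r hr)
    simp only [terminals_append, List.count_append, terminals_inl_cons] at hstep ⊢
    rw [Nat.succ_mul]
    omega

namespace CDGS

variable (G : CDGS T) {f : Mode} {b : ℕ} {x y : SForm T}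

theorem modeStepB_le_modeStep (f : Mode) (b : ℕ) : G.ModeStepB f b ≤ G.ModeStep f :=
  fun _ _ ⟨i, k, hxy, hf⟩ => ⟨i, k, hxy.stepsN_s17, hf⟩

theorem ntCount_le_of_reflTransGen {G : CDGS T}
    (h : Relation.ReflTransGen (G.ModeStepB f b) x y) (hx : ntCount x ≤ b) : ntCount y ≤ b := by
  induction h with
  | refl => exact hx
  | tail _ hyz ih =>
    obtain ⟨i, k, hyz, -⟩ := hyz
    exact hyz.ntCount_le ih

theorem exists_length_le : ∃ C, ∀ i, ∀ r ∈ G.comp i, r.2.length ≤ C := by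
  have hfin : (⋃ i, {r | r ∈ G.comp i}).Finite :=
    Set.finite_iUnion fun i => (G.comp i).finite_toSet
  obtain ⟨C, hC⟩ := (hfin.image fun r => r.2.length).bddAbove
  exact ⟨C, fun i r hr => hC ⟨r, Set.mem_iUnion.2 ⟨i, hr⟩, rfl⟩⟩

theorem ModeStepB.count_terminals_le [DecidableEq T] {G : CDGS T} {k C : ℕ}
    (h : G.ModeStepB f b x y) (hf : ∀ (P : List (Rule T)) j x, modeOK P f j x → j ≤ k)
    (hC : ∀ i, ∀ r ∈ G.comp i, r.2.length ≤ C) (a : T) :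
    (terminals y).count a ≤ (terminals x).count a + k * C := by
  obtain ⟨i, j, hxy, hj⟩ := h
  exact (hxy.stepsN_s17.count_terminals_le (hC i) a).trans
    (Nat.add_le_add_left (Nat.mul_le_mul_right C (hf _ _ _ hj)) _)

/-- The start symbol of a grammar system and the nonterminals on the right-hand sides of its rules,
that is, the nonterminals that can occur in its derivations. -/
def nonterminals : Set ℕ :=
  insert G.start (⋃ i, {A | A ∈ (G.comp i).flatMap fun r => skeleton r.2})

theorem finite_nonterminals : G.nonterminals.Finite :=
  (Set.finite_iUnion fun _ => List.finite_toSet _).insert _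

theorem skeleton_subset_nonterminals {i : Fin G.deg} (h : Relation.ReflTransGen
    (RStep (G.comp i)) x y) (hx : ∀ A ∈ skeleton x, A ∈ G.nonterminals) :
    ∀ A ∈ skeleton y, A ∈ G.nonterminals := by
  induction h with
  | refl => exact hx
  | tail _ hyz ih =>
    obtain ⟨r, hr, u, v, rfl, rfl⟩ := hyz
    intro A hA
    simp only [skeleton_append, skeleton_inl_cons, List.mem_append, List.mem_cons] at ih hA
    rcases hA with (hA | hA) | hA
    · exact ih A (.inl hA)
    · exact .inr (Set.mem_iUnion.2 ⟨i, List.mem_flatMap.2 ⟨r, hr, hA⟩⟩)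
    · exact ih A (.inr (.inr hA))

theorem finite_skeletons (f : Mode) (hb : 1 ≤ b) :
    {s | ∃ x, Relation.ReflTransGen (G.ModeStepB f b) [Sum.inl G.start] x ∧
      skeleton x = s}.Finite := by
  have := G.finite_nonterminals.to_subtype
  refine ((List.finite_length_le G.nonterminals b).image (List.map Subtype.val)).subset ?_
  rintro _ ⟨x, hx, rfl⟩
  have hle := ntCount_le_of_reflTransGen hx hb
  have hsub : ∀ A ∈ skeleton x, A ∈ G.nonterminals := by
    induction hx with
    | refl => simp [nonterminals]
    | tail hxy hyz ih =>
      obtain ⟨i, k, hyz, -⟩ := hyz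
      exact G.skeleton_subset_nonterminals hyz.stepsN_s17.reflTransGen
        (ih (ntCount_le_of_reflTransGen hxy hb))
  lift skeleton x to List G.nonterminals using hsub with s hs
  refine ⟨s, ?_, rfl⟩
  rw [ntCount_eq_length_skeleton, ← hs, List.length_map] at hle
  exact hle

end CDGS

end BoundedIndex

section Crossing

variable {α : Type*} {R : α → α → Prop}

theorem exists_crossing {φ : α → ℕ} {C c : ℕ} (hφ : ∀ x y, R x y → φ y ≤ φ x + C) {x y : α}
    (h : Relation.ReflTransGen R x y) (hx : φ x < c) (hy : c ≤ φ y) :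
    ∃ z, Relation.TransGen R x z ∧ Relation.ReflTransGen R z y ∧ c ≤ φ z ∧ φ z < c + C := by
  induction h using Relation.ReflTransGen.head_induction_on with
  | refl => omega
  | @head x z hxz hzy ih =>
    by_cases hz : φ z < c
    · obtain ⟨z', hzz', hz'y, hlow, hhigh⟩ := ih hz
      exact ⟨z', .head hxz hzz', hz'y, hlow, hhigh⟩
    · exact ⟨z, .single hxz, hzy, not_lt.1 hz, (hφ x z hxz).trans_lt (Nat.add_lt_add_right hx C)⟩

end Crossing

/-! ### A language without derivations of bounded index -/

section LowerBound

variable {T : Type} [LinearOrder T]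

/-- The number of occurrences of the letters of `X` is constant on `X` in every word of `L`. -/
def Balanced (L : Set (List T)) (X : Finset T) : Prop :=
  ∀ w ∈ L, ∀ a ∈ X, ∀ c ∈ X, w.count a = w.count c

theorem Balanced.count_terminals_le {G : CDGS T} {f : Mode} {L : Set (List T)} {X : Finset T}
    (hL : Balanced L X) (hG : EqL (G.lang f) L) {y : SForm T} {us : List (List T)}
    (hus : us.length = (skeleton y).length)
    (hy : fill y us ∈ G.lang f) {a c : T} (ha : a ∈ X) (hc : c ∈ X) :
    (terminals y).count a ≤ (terminals y).count c + us.flatten.length := by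
  have hcount : (fill y us).count a = (fill y us).count c := by
    by_cases hnil : fill y us = []
    · simp [hnil]
    · exact hL _ (hG.subset ⟨hy, hnil⟩).1 a ha c hc
  have hle : us.flatten.count c ≤ us.flatten.length := List.count_le_length
  rw [count_fill hus, count_fill hus] at hcount
  omega

theorem min_card_lt_of_count_terminals_le {A B : Finset T} (hAB : ∀ a ∈ A, ∀ c ∈ B, a < c)
    {y : SForm T} {vs : List (List T)} (hvs : vs.length = (skeleton y).length)
    (hsorted : (fill y vs).Pairwise (· ≤ ·)) {M n : ℕ} (hn : ∀ d ∈ A ∪ B, (fill y vs).count d = n)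
    (hA : ∀ d ∈ A, ∀ e ∈ A, (terminals y).count d ≤ (terminals y).count e + M)
    (hB : ∀ d ∈ B, ∀ e ∈ B, (terminals y).count d ≤ (terminals y).count e + M)
    {a c : T} (ha : a ∈ A) (hc : c ∈ B)
    (hlow : M < max ((terminals y).count a) ((terminals y).count c))
    (hhigh : max ((terminals y).count a) ((terminals y).count c) + M < n) :
    min A.card B.card < 2 * vs.length := by
  have mem_flatten : ∀ d ∈ A ∪ B, (terminals y).count d < n → d ∈ vs.flatten := by
    intro d hd hlt
    have hcount := hn d hd
    rw [count_fill hvs] at hcount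
    exact List.count_pos_iff.1 (by omega)
  have mem_terminals {d e : T} (hd : M < (terminals y).count d)
      (hde : (terminals y).count d ≤ (terminals y).count e + M) : e ∈ terminals y :=
    List.count_pos_iff.1 (by omega)
  rcases lt_max_iff.1 hlow with ha' | hc'
  · refine (min_le_left _ _).trans_lt (card_lt_of_forall_mem_terminals hvs hsorted
      (fun e he => ⟨mem_terminals ha' (hA a ha e he),
        mem_flatten e (Finset.mem_union_left B he) ?_⟩)
      (mem_flatten c (Finset.mem_union_right A hc) ?_) (.inl fun e he => hAB e he c hc))
    · have := hA e he a ha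
      omega
    · omega
  · refine (min_le_right _ _).trans_lt (card_lt_of_forall_mem_terminals hvs hsorted
      (fun e he => ⟨mem_terminals hc' (hB c hc e he),
        mem_flatten e (Finset.mem_union_right A he) ?_⟩)
      (mem_flatten a (Finset.mem_union_left B ha) ?_) (.inr fun e he => hAB a ha e he))
    · have := hB e he c hc
      omega
    · omega

theorem notMem_CDFamIndInf {f : Mode} {k b : ℕ} (lf : Bool)
    (hf : ∀ (P : List (Rule T)) j x, modeOK P f j x → j ≤ k) (hb : 1 ≤ b)
    {A B : Finset T} (hAB : ∀ a ∈ A, ∀ c ∈ B, a < c) (hcardA : 2 * b ≤ A.card)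
    (hcardB : 2 * b ≤ B.card) {L : Set (List T)} (hsorted : ∀ w ∈ L, w.Pairwise (· ≤ ·))
    (hA : Balanced L A) (hB : Balanced L B)
    (hlarge : ∀ N, ∃ w ∈ L, ∃ n, N ≤ n ∧ ∀ d ∈ A ∪ B, w.count d = n) :
    L ∉ CDFamIndInf T lf f b := by
  rintro ⟨G, -, hG, hind⟩
  obtain ⟨a, ha⟩ : A.Nonempty := Finset.card_pos.1 (by omega)
  obtain ⟨c, hc⟩ : B.Nonempty := Finset.card_pos.1 (by omega)
  obtain ⟨C, hC⟩ := G.exists_length_le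
  obtain ⟨M, hM⟩ := (G.contextFree_modeStep f).exists_short_fill (G.finite_skeletons f hb)
  obtain ⟨w, hw, n, hN, hn⟩ := hlarge (2 * M + k * C + 2)
  have hwa : w.count a = n := hn a (Finset.mem_union_left B ha)
  have hwnil : w ≠ [] := by
    rintro rfl
    rw [List.count_nil] at hwa
    omega
  obtain ⟨-, hder⟩ := hind (hG.symm.subset ⟨hw, hwnil⟩).1
  let φ (x : SForm T) : ℕ := max ((terminals x).count a) ((terminals x).count c)
  have hφ (x y : SForm T) (hxy : G.ModeStepB f b x y) : φ y ≤ φ x + k * C :=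
    max_le ((hxy.count_terminals_le hf hC a).trans (Nat.add_le_add_right (le_max_left _ _) _))
      ((hxy.count_terminals_le hf hC c).trans (Nat.add_le_add_right (le_max_right _ _) _))
  obtain ⟨y, hstart, hyw, hlow, hhigh⟩ :=
    exists_crossing (c := M + 1) hφ hder.to_reflTransGen (by simp [φ])
      (le_max_of_le_left (by rw [terminals_map_inr, hwa]; omega))
  replace hyw : Relation.ReflTransGen (G.ModeStep f) y (w.map Sum.inr) :=
    Relation.ReflTransGen.mono (G.modeStepB_le_modeStep f b) _ _ hyw
  obtain ⟨vs, hvs, rfl, -⟩ := (G.contextFree_modeStep f).exists_fill hyw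
  obtain ⟨us, hus, hle, hyus⟩ := hM y _ ⟨y, hstart.to_reflTransGen, rfl⟩ hyw
  have hlang : fill y us ∈ G.lang f :=
    (Relation.TransGen.mono (G.modeStepB_le_modeStep f b) _ _ hstart).trans_left hyus
  have hspread {X : Finset T} (hX : Balanced L X) :
      ∀ d ∈ X, ∀ e ∈ X, (terminals y).count d ≤ (terminals y).count e + M := fun d hd e he =>
    (hX.count_terminals_le hG hus hlang hd he).trans (Nat.add_le_add_left hle _)
  have hmin := min_card_lt_of_count_terminals_le hAB hvs (hsorted _ hw) hn (hspread hA) (hspread hB)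
    ha hc hlow ((Nat.add_lt_add_right hhigh M).trans_le (by omega))
  have hyb := CDGS.ntCount_le_of_reflTransGen hstart.to_reflTransGen hb
  rw [ntCount_eq_length_skeleton, ← hvs] at hyb
  omega

end LowerBound

/-! ### Slot systems -/

/-- The phase of a slot: resting, waiting to be rewritten by the shared component, or terminal. -/
inductive Phase
  | rest
  | active
  | done
  deriving DecidableEq

/-- The phases in which a rewriting step can leave a slot. -/
def Phase.next : Phase → List Phase
  | rest => [active]
  | active => [rest, done]
  | done => []

/-- The component that rewrites a slot of group `b`: the component of the group when the slot is
resting, the last (shared) component when it is active. -/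
def Phase.owner {d : ℕ} (b : Fin d) : Phase → Option (Fin (d + 1))
  | rest => some b.castSucc
  | active => some (Fin.last d)
  | done => none

theorem Phase.owner_ne_of_mem_next {d : ℕ} (b : Fin d) {p p' : Phase} (h : p' ∈ p.next) :
    p'.owner b ≠ p.owner b := by
  cases p <;> cases p' <;>
    simp_all [next, owner, Fin.castSucc_ne_last, (Fin.castSucc_ne_last _).symm]

theorem Phase.exists_mem_next {d : ℕ} {b : Fin d} {p : Phase} {i : Fin (d + 1)}
    (h : p.owner b = some i) : ∃ p', p' ∈ p.next := by
  cases p <;> simp_all [next, owner]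

theorem Phase.eq_active_iff_of_mem_next {d : ℕ} {b : Fin d} {p p' : Phase} {i : Fin (d + 1)}
    (h : p.owner b = some i) (h' : p' ∈ p.next) : p' = active ↔ i ≠ Fin.last d := by
  cases p <;> cases p' <;> simp_all [next, owner, eq_comm, Fin.castSucc_ne_last]

/-- The data of the witness grammar systems: `size` slots, each with a left and a right letter
(at `false` and `true`) and a group. -/
structure SlotSystem (T : Type) where
  size : ℕ
  groups : ℕ
  group : Fin size → Fin groups
  letter : Fin size ×ₗ Bool → T

namespace SlotSystem

variable {T : Type} (S : SlotSystem T)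

/-- The states of the slots: for each of them the number of its rewritings so far, which is also the
number of letters it has emitted on either side, and its phase. -/
abbrev State : Type := Fin S.size → ℕ × Phase

/-- The nonterminal of a slot in a given phase; `0` is left for the start symbol, and the value at
`done` is never used. -/
def code (t : Fin S.size) : Phase → ℕ
  | .rest => 3 * t + 1
  | .active => 3 * t + 2
  | .done => 3 * t + 3

/-- What stands between the letters of a slot: its nonterminal, or nothing if it is done. -/
def core (t : Fin S.size) (p : Phase) : SForm T := if p = .done then [] else [Sum.inl (S.code t p)]

/-- The right-hand side of a rule leaving a slot in phase `p`: one more letter on either side. -/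
def emit (t : Fin S.size) (p : Phase) : SForm T :=
  Sum.inr (S.letter (toLex (t, false))) :: S.core t p ++ [Sum.inr (S.letter (toLex (t, true)))]

/-- The part of a sentential form contributed by one slot. -/
def block (t : Fin S.size) (q : ℕ × Phase) : SForm T :=
  List.replicate q.1 (Sum.inr (S.letter (toLex (t, false)))) ++ S.core t q.2 ++
    List.replicate q.1 (Sum.inr (S.letter (toLex (t, true))))

/-- The sentential form of a state of the slots. -/
def form (σ : S.State) : SForm T := (List.finRange S.size).flatMap fun t => S.block t (σ t)

/-- The initial state. -/
def init : S.State := fun _ => (0, .rest)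

/-- The rules of component `i`: it rewrites the slots that it owns, and the last component moreover
starts the derivation. The rule `0 → 0` lets the latter reach the prescribed number of steps. -/
def rules (i : Fin (S.groups + 1)) : List (Rule T) :=
  (if i = Fin.last _ then [(0, [Sum.inl 0]), (0, S.form S.init)] else []) ++
    (List.finRange S.size).flatMap fun t => [Phase.rest, Phase.active].flatMap fun p =>
      if p.owner (S.group t) = some i then p.next.map fun p' => (S.code t p, S.emit t p') else []

/-- The grammar system of a slot system, with one component per group and a shared one. -/
def system : CDGS T := ⟨S.groups + 1, 0, S.rules⟩

/-- The slots that component `i` can rewrite. -/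
def owned (i : Fin (S.groups + 1)) (σ : S.State) : Finset (Fin S.size) :=
  {t | (σ t).2.owner (S.group t) = some i}

/-- The state `τ` arises from `σ` by rewriting each slot of `s` once. -/
def Advance (s : Finset (Fin S.size)) (σ τ : S.State) : Prop :=
  ∀ t, if t ∈ s then (τ t).1 = (σ t).1 + 1 ∧ (τ t).2 ∈ (σ t).2.next else τ t = σ t

variable {S}

theorem mem_owned {i : Fin (S.groups + 1)} {σ : S.State} {t : Fin S.size} :
    t ∈ S.owned i σ ↔ (σ t).2.owner (S.group t) = some i := by simp [owned]

theorem code_inj {t t' : Fin S.size} {p p' : Phase} :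
    S.code t p = S.code t' p' ↔ t = t' ∧ p = p' := by
  rw [Fin.ext_iff]
  cases p <;> cases p' <;> simp [code] <;> omega

theorem mem_rules {i : Fin (S.groups + 1)} {r : Rule T} :
    r ∈ S.rules i ↔ (i = Fin.last _ ∧ (r = (0, [Sum.inl 0]) ∨ r = (0, S.form S.init))) ∨
      ∃ t p, p.owner (S.group t) = some i ∧ ∃ p' ∈ p.next, r = (S.code t p, S.emit t p') := by
  simp only [rules, List.mem_append, List.mem_ite_nil_right, List.mem_cons, List.not_mem_nil,
    or_false, List.mem_flatMap, List.mem_finRange, true_and, List.mem_map]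
  refine or_congr_right (exists_congr fun t => ⟨?_, ?_⟩)
  · rintro ⟨p, -, hp, p', hp', rfl⟩
    exact ⟨p, hp, p', hp', rfl⟩
  · rintro ⟨p, hp, p', hp', rfl⟩
    exact ⟨p, by cases p <;> simp_all [Phase.owner], hp, p', hp', rfl⟩

theorem inl_mem_block {t : Fin S.size} {q : ℕ × Phase} {A : ℕ} :
    Sum.inl A ∈ S.block t q ↔ q.2 ≠ .done ∧ A = S.code t q.2 := by
  by_cases h : q.2 = .done <;> simp [block, core, h]

theorem inl_mem_form {σ : S.State} {A : ℕ} :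
    Sum.inl A ∈ S.form σ ↔ ∃ t, (σ t).2 ≠ .done ∧ A = S.code t (σ t).2 := by
  simp [form, inl_mem_block]

theorem inl_code_mem_form {σ : S.State} {t : Fin S.size} {p : Phase} :
    Sum.inl (S.code t p) ∈ S.form σ ↔ p ≠ .done ∧ (σ t).2 = p := by
  simp only [inl_mem_form, code_inj]
  constructor
  · rintro ⟨_, h, rfl, rfl⟩
    exact ⟨h, rfl⟩
  · rintro ⟨h, rfl⟩
    exact ⟨t, h, rfl, rfl⟩

theorem inl_zero_notMem_form (σ : S.State) : Sum.inl 0 ∉ S.form σ := by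
  rw [inl_mem_form]
  rintro ⟨t, -, h⟩
  cases hp : (σ t).2 <;> simp [hp, code] at h

theorem block_succ (t : Fin S.size) (c : ℕ) (p : Phase) :
    S.block t (c + 1, p) = List.replicate c (Sum.inr (S.letter (toLex (t, false)))) ++ S.emit t p ++
      List.replicate c (Sum.inr (S.letter (toLex (t, true)))) := by
  simp only [block, emit, List.replicate_succ', List.append_assoc, List.cons_append,
    List.nil_append]
  rw [← List.replicate_succ, List.replicate_succ']

theorem exists_form_update (σ : S.State) (t : Fin S.size) :
    ∃ u v : SForm T, (∀ p, Sum.inl (S.code t p) ∉ u) ∧ (∀ p, Sum.inl (S.code t p) ∉ v) ∧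
      ∀ q, S.form (Function.update σ t q) = u ++ S.block t q ++ v := by
  obtain ⟨as, bs, h⟩ := List.append_of_mem (List.mem_finRange t)
  have hnodup := h ▸ List.nodup_finRange S.size
  have has : t ∉ as := fun ha => (List.nodup_append.1 hnodup).2.2 t ha t List.mem_cons_self rfl
  have hbs : t ∉ bs := (List.nodup_cons.1 (List.nodup_append.1 hnodup).2.1).1
  have hcode {ts : List (Fin S.size)} (hts : t ∉ ts) (p : Phase) :
      Sum.inl (S.code t p) ∉ ts.flatMap fun t => S.block t (σ t) := by
    simp only [List.mem_flatMap, inl_mem_block, code_inj]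
    rintro ⟨_, ht, -, rfl, -⟩
    exact hts ht
  have hupdate {ts : List (Fin S.size)} (hts : t ∉ ts) (q : ℕ × Phase) :
      (ts.flatMap fun t' => S.block t' (Function.update σ t q t')) =
        ts.flatMap fun t' => S.block t' (σ t') :=
    List.flatMap_congr fun t' ht' => by
      rw [Function.update_of_ne (ne_of_mem_of_not_mem ht' hts)]
  refine ⟨_, _, hcode has, hcode hbs, fun q => ?_⟩
  rw [form, h, List.flatMap_append, List.flatMap_cons, hupdate has, hupdate hbs,
    Function.update_self, List.append_assoc]

theorem exists_form_eq {σ : S.State} {t : Fin S.size} (h : (σ t).2 ≠ .done) :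
    ∃ u v : SForm T, Sum.inl (S.code t (σ t).2) ∉ u ∧ Sum.inl (S.code t (σ t).2) ∉ v ∧
      S.form σ = u ++ Sum.inl (S.code t (σ t).2) :: v ∧
      ∀ p, S.form (Function.update σ t ((σ t).1 + 1, p)) = u ++ S.emit t p ++ v := by
  obtain ⟨u, v, hu, hv, hform⟩ := exists_form_update σ t
  refine ⟨u ++ List.replicate (σ t).1 (Sum.inr (S.letter (toLex (t, false)))),
    List.replicate (σ t).1 (Sum.inr (S.letter (toLex (t, true)))) ++ v, by simp [hu], by simp [hv],
    ?_, fun p => ?_⟩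
  · have := hform (σ t)
    rw [Function.update_eq_self] at this
    simp [this, block, core, h]
  · simp [hform, block_succ]

theorem rstep_form_iff {i : Fin (S.groups + 1)} {σ : S.State} {y : SForm T} :
    RStep (S.rules i) (S.form σ) y ↔ ∃ t ∈ S.owned i σ, ∃ p ∈ (σ t).2.next,
      y = S.form (Function.update σ t ((σ t).1 + 1, p)) := by
  constructor
  · rintro ⟨r, hr, u, v, hσ, rfl⟩
    have hmem : Sum.inl r.1 ∈ S.form σ := by simp [hσ]
    rcases mem_rules.1 hr with ⟨-, rfl | rfl⟩ | ⟨t, p, hi, p', hp', rfl⟩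
    · exact absurd hmem (inl_zero_notMem_form σ)
    · exact absurd hmem (inl_zero_notMem_form σ)
    · obtain ⟨hdone, rfl⟩ := inl_code_mem_form.1 hmem
      obtain ⟨u', v', hu', hv', hform, hupdate⟩ := exists_form_eq hdone
      obtain ⟨rfl, -, rfl⟩ := (List.append_cons_inj_of_notMem hu' hv').1 (hform.symm.trans hσ)
      exact ⟨t, mem_owned.2 hi, p', hp', (hupdate p').symm⟩
  · rintro ⟨t, ht, p, hp, rfl⟩
    have hdone : (σ t).2 ≠ .done := by
      intro h
      simp [h, Phase.next] at hp
    obtain ⟨u, v, -, -, hform, hupdate⟩ := exists_form_eq hdone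
    exact ⟨_, mem_rules.2 (.inr ⟨t, _, mem_owned.1 ht, p, hp, rfl⟩), u, v, hform, hupdate p⟩

theorem owned_update {i : Fin (S.groups + 1)} {σ : S.State} {t : Fin S.size} (ht : t ∈ S.owned i σ)
    {p : Phase} (hp : p ∈ (σ t).2.next) (c : ℕ) :
    S.owned i (Function.update σ t (c, p)) = (S.owned i σ).erase t := by
  ext t'
  rw [Finset.mem_erase, mem_owned, mem_owned]
  rcases eq_or_ne t' t with rfl | hne
  · simp [← mem_owned.1 ht, Phase.owner_ne_of_mem_next _ hp]
  · simp [hne]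

theorem advance_empty {σ τ : S.State} : S.Advance ∅ σ τ ↔ τ = σ := by
  simp [Advance, funext_iff]

theorem advance_insert {s : Finset (Fin S.size)} {t : Fin S.size} (ht : t ∉ s) {σ τ : S.State} :
    S.Advance (insert t s) σ τ ↔
      ∃ p ∈ (σ t).2.next, S.Advance s (Function.update σ t ((σ t).1 + 1, p)) τ := by
  constructor
  · intro h
    have htt := h t
    rw [if_pos (Finset.mem_insert_self t s)] at htt
    refine ⟨(τ t).2, htt.2, fun t' => ?_⟩
    rcases eq_or_ne t' t with rfl | hne
    · simp [ht, Prod.ext_iff, htt.1]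
    · simpa [hne] using h t'
  · rintro ⟨p, hp, h⟩ t'
    rcases eq_or_ne t' t with rfl | hne
    · have htt := h t'
      simp_all
    · simpa [hne] using h t'

theorem stepsN_form_iff {i : Fin (S.groups + 1)} {k : ℕ} {σ : S.State} {y : SForm T} :
    StepsN (S.rules i) k (S.form σ) y ↔
      ∃ s ⊆ S.owned i σ, s.card = k ∧ ∃ τ, S.Advance s σ τ ∧ y = S.form τ := by
  induction k generalizing σ with
  | zero =>
    simp only [StepsN, Finset.card_eq_zero]
    constructor
    · rintro rfl
      exact ⟨∅, Finset.empty_subset _, rfl, σ, advance_empty.2 rfl, rfl⟩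
    · rintro ⟨_, -, rfl, τ, hτ, rfl⟩
      rw [advance_empty.1 hτ]
  | succ k ih =>
    constructor
    · rintro ⟨_, hz, hzy⟩
      obtain ⟨t, ht, p, hp, rfl⟩ := rstep_form_iff.1 hz
      obtain ⟨s, hs, rfl, τ, hτ, rfl⟩ := ih.1 hzy
      rw [owned_update ht hp] at hs
      have hts : t ∉ s := fun h => Finset.notMem_erase t _ (hs h)
      exact ⟨insert t s, Finset.insert_subset ht (hs.trans (Finset.erase_subset _ _)),
        Finset.card_insert_of_notMem hts, τ, (advance_insert hts).2 ⟨p, hp, hτ⟩, rfl⟩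
    · rintro ⟨_, hs, hk, τ, hτ, rfl⟩
      obtain ⟨t, s, hts, rfl, rfl⟩ := Finset.card_eq_succ.1 hk
      obtain ⟨p, hp, hτ⟩ := (advance_insert hts).1 hτ
      rw [Finset.insert_subset_iff] at hs
      refine ⟨_, rstep_form_iff.2 ⟨t, hs.1, p, hp, rfl⟩, ih.2 ⟨s, ?_, rfl, τ, hτ, rfl⟩⟩
      rw [owned_update hs.1 hp]
      exact Finset.subset_erase.2 ⟨hs.2, hts⟩

theorem exists_rstep_form_iff {i : Fin (S.groups + 1)} {σ : S.State} :
    (∃ y, RStep (S.rules i) (S.form σ) y) ↔ (S.owned i σ).Nonempty := by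
  simp only [rstep_form_iff]
  constructor
  · rintro ⟨-, t, ht, -⟩
    exact ⟨t, ht⟩
  · rintro ⟨t, ht⟩
    obtain ⟨p, hp⟩ := Phase.exists_mem_next (mem_owned.1 ht)
    exact ⟨_, t, ht, p, hp, rfl⟩

theorem Advance.owned_eq_empty_iff {i : Fin (S.groups + 1)} {s : Finset (Fin S.size)}
    {σ τ : S.State} (hs : s ⊆ S.owned i σ) (h : S.Advance s σ τ) :
    S.owned i τ = ∅ ↔ s = S.owned i σ := by
  have hmem (t : Fin S.size) : t ∈ S.owned i τ ↔ t ∈ S.owned i σ ∧ t ∉ s := by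
    have ht := h t
    by_cases hts : t ∈ s
    · rw [if_pos hts] at ht
      simp [mem_owned, hts, ← mem_owned.1 (hs hts), Phase.owner_ne_of_mem_next _ ht.2]
    · rw [if_neg hts] at ht
      simp [mem_owned, hts, ht]
  simp only [Finset.eq_empty_iff_forall_notMem, hmem, not_and, not_not]
  exact ⟨fun h => hs.antisymm h, fun h => h.superset⟩

theorem modeStep_form_iff {m : ℕ} {σ : S.State} {y : SForm T} :
    S.system.ModeStep (.conj .t (.eq m)) (S.form σ) y ↔
      ∃ i τ, (S.owned i σ).card = m ∧ S.Advance (S.owned i σ) σ τ ∧ y = S.form τ := by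
  constructor
  · rintro ⟨i, k, hy, hmax, rfl⟩
    obtain ⟨s, hs, hcard, τ, hτ, rfl⟩ := stepsN_form_iff.1 hy
    obtain rfl := (hτ.owned_eq_empty_iff hs).1
      (Finset.not_nonempty_iff_eq_empty.1 (mt exists_rstep_form_iff.2 hmax))
    exact ⟨i, τ, hcard, hτ, rfl⟩
  · rintro ⟨i, τ, rfl, hτ, rfl⟩
    refine ⟨i, _, stepsN_form_iff.2 ⟨_, subset_rfl, rfl, τ, hτ, rfl⟩, fun hstep => ?_, rfl⟩
    exact (exists_rstep_form_iff.1 hstep).ne_empty ((hτ.owned_eq_empty_iff subset_rfl).2 rfl)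

theorem rstep_start_iff {i : Fin (S.groups + 1)} {y : SForm T} :
    RStep (S.rules i) [Sum.inl 0] y ↔ i = Fin.last _ ∧ (y = [Sum.inl 0] ∨ y = S.form S.init) := by
  constructor
  · rintro ⟨r, hr, u, v, huv, rfl⟩
    obtain ⟨rfl, h0, rfl⟩ : u = [] ∧ r.1 = 0 ∧ v = [] := by
      rcases List.append_eq_singleton_iff.1 huv.symm with ⟨rfl, h⟩ | ⟨-, h⟩
      · simpa using h
      · exact absurd h (List.cons_ne_nil _ _)
    rcases mem_rules.1 hr with ⟨rfl, rfl | rfl⟩ | ⟨t, p, -, p', -, rfl⟩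
    · simp
    · simp
    · cases p <;> simp [code] at h0
  · rintro ⟨rfl, rfl | rfl⟩
    · exact ⟨_, mem_rules.2 (.inl ⟨rfl, .inl rfl⟩), [], [], rfl, rfl⟩
    · exact ⟨_, mem_rules.2 (.inl ⟨rfl, .inr rfl⟩), [], [], rfl, by simp⟩

theorem owned_last_init : S.owned (Fin.last _) S.init = ∅ := by
  simp [Finset.eq_empty_iff_forall_notMem, mem_owned, init, Phase.owner, Fin.castSucc_ne_last]

theorem eq_or_eq_of_stepsN_start {i : Fin (S.groups + 1)} {k : ℕ} {y : SForm T}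
    (h : StepsN (S.rules i) k [Sum.inl 0] y) : y = [Sum.inl 0] ∨ y = S.form S.init := by
  induction k with
  | zero => exact .inl (show [Sum.inl 0] = y from h).symm
  | succ k ih =>
    obtain ⟨z, hz, hzy⟩ := h
    obtain ⟨rfl, rfl | rfl⟩ := rstep_start_iff.1 hz
    · exact ih hzy
    · obtain ⟨s, hs, -, τ, hτ, rfl⟩ := stepsN_form_iff.1 hzy
      rw [owned_last_init, Finset.subset_empty] at hs
      rw [hs, advance_empty] at hτ
      exact .inr (by rw [hτ])

theorem modeStep_start {m : ℕ} (hm : 1 ≤ m) :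
    S.system.ModeStep (.conj .t (.eq m)) [Sum.inl 0] (S.form S.init) := by
  have hsteps (k : ℕ) : StepsN (S.rules (Fin.last _)) (k + 1) [Sum.inl 0] (S.form S.init) := by
    induction k with
    | zero => exact ⟨_, rstep_start_iff.2 ⟨rfl, .inr rfl⟩, rfl⟩
    | succ k ih => exact ⟨_, rstep_start_iff.2 ⟨rfl, .inl rfl⟩, ih⟩
  obtain ⟨k, rfl⟩ := Nat.exists_eq_add_of_le' hm
  refine ⟨Fin.last _, k + 1, hsteps k, fun hstep => ?_, rfl⟩
  exact (exists_rstep_form_iff.1 hstep).ne_empty owned_last_init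

/-! ### The language of a slot system -/

variable (S)

/-- The slots of a group. -/
def slots (b : Fin S.groups) : Finset (Fin S.size) := {t | S.group t = b}

/-- The letters of the slots of a group. -/
def letters [DecidableEq T] (b : Fin S.groups) : Finset T :=
  (S.slots b ×ˢ Finset.univ).image fun x => S.letter (toLex x)

/-- The word in which both letters of each slot `t` are repeated `c t` times. -/
def word (c : Fin S.size → ℕ) : List T :=
  (List.finRange S.size).flatMap fun t => List.replicate (c t) (S.letter (toLex (t, false))) ++
    List.replicate (c t) (S.letter (toLex (t, true)))

/-- The slots of a group have been rewritten equally often, and they are active together. A resting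
slot may share its group with slots that are done; the derivation is then stuck. -/
def Synchronized (σ : S.State) : Prop :=
  ∀ t t', S.group t = S.group t' → (σ t).1 = (σ t').1 ∧ ((σ t).2 = .active ↔ (σ t').2 = .active)

variable {S}

theorem mem_letters [DecidableEq T] {b : Fin S.groups} {a : T} :
    a ∈ S.letters b ↔ ∃ t s, S.group t = b ∧ S.letter (toLex (t, s)) = a := by
  simp [letters, slots]

theorem form_done (c : Fin S.size → ℕ) :
    S.form (fun t => (c t, .done)) = (S.word c).map Sum.inr := by
  simp [form, word, block, core, List.map_flatMap]

theorem eq_word_of_form_eq {σ : S.State} {w : List T} (h : S.form σ = w.map Sum.inr) :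
    w = S.word fun t => (σ t).1 := by
  have hdone (t : Fin S.size) : (σ t).2 = .done := by
    by_contra ht
    have hmem := inl_code_mem_form.2 ⟨ht, rfl⟩
    simp [h] at hmem
  refine List.map_injective_iff.2 (Sum.inr_injective (α := ℕ)) ?_
  rw [← h, ← form_done]
  exact congrArg S.form (funext fun t => Prod.ext rfl (hdone t))

theorem synchronized_init : S.Synchronized S.init := fun _ _ _ => ⟨rfl, Iff.rfl⟩

theorem owned_castSucc_subset (b : Fin S.groups) (σ : S.State) :
    S.owned b.castSucc σ ⊆ S.slots b := by
  intro t ht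
  rw [mem_owned] at ht
  cases hp : (σ t).2 <;> simp_all [slots, Phase.owner, (Fin.castSucc_ne_last _).symm]

theorem mem_owned_last {σ : S.State} {t : Fin S.size} :
    t ∈ S.owned (Fin.last _) σ ↔ (σ t).2 = .active := by
  rw [mem_owned]
  cases (σ t).2 <;> simp [Phase.owner, Fin.castSucc_ne_last]

section Soundness

variable {m : ℕ} (hS : ∀ b, (S.slots b).card = m)
include hS

theorem Synchronized.mem_owned_iff {i : Fin (S.groups + 1)} {σ : S.State} (hσ : S.Synchronized σ)
    (hcard : (S.owned i σ).card = m) {t t' : Fin S.size} (h : S.group t = S.group t') :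
    t ∈ S.owned i σ ↔ t' ∈ S.owned i σ := by
  induction i using Fin.lastCases with
  | last => simp only [mem_owned_last, (hσ t t' h).2]
  | cast b =>
    rw [Finset.eq_of_subset_of_card_le (owned_castSucc_subset b σ) (by rw [hS, hcard])]
    simp [slots, h]

theorem Synchronized.advance {i : Fin (S.groups + 1)} {σ τ : S.State} (hσ : S.Synchronized σ)
    (hcard : (S.owned i σ).card = m) (h : S.Advance (S.owned i σ) σ τ) : S.Synchronized τ := by
  intro t t' htt'
  have ht := h t
  have ht' := h t'
  simp only [← hσ.mem_owned_iff hS hcard htt'] at ht'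
  by_cases hmem : t ∈ S.owned i σ
  · rw [if_pos hmem] at ht ht'
    have hmem' := (hσ.mem_owned_iff hS hcard htt').1 hmem
    rw [Phase.eq_active_iff_of_mem_next (mem_owned.1 hmem) ht.2,
      Phase.eq_active_iff_of_mem_next (mem_owned.1 hmem') ht'.2, ht.1, ht'.1, (hσ t t' htt').1]
    exact ⟨rfl, Iff.rfl⟩
  · rw [if_neg hmem] at ht ht'
    rw [ht, ht']
    exact hσ t t' htt'

theorem eq_start_or_synchronized {y : SForm T}
    (h : Relation.ReflTransGen (S.system.ModeStep (.conj .t (.eq m))) [Sum.inl 0] y) :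
    y = [Sum.inl 0] ∨ ∃ σ, S.Synchronized σ ∧ y = S.form σ := by
  induction h with
  | refl => exact .inl rfl
  | tail _ hyz ih =>
    rcases ih with rfl | ⟨σ, hσ, rfl⟩
    · obtain ⟨i, k, hsteps, -⟩ := hyz
      exact (eq_or_eq_of_stepsN_start hsteps).imp_right fun h => ⟨_, synchronized_init, h⟩
    · obtain ⟨i, τ, hcard, hτ, rfl⟩ := modeStep_form_iff.1 hyz
      exact .inr ⟨τ, hσ.advance hS hcard hτ, rfl⟩

theorem exists_word_of_mem_lang {w : List T} (hw : w ∈ S.system.lang (.conj .t (.eq m))) :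
    ∃ c, (∀ t t', S.group t = S.group t' → c t = c t') ∧ w = S.word c := by
  rcases eq_start_or_synchronized hS (Relation.TransGen.to_reflTransGen hw) with h | ⟨σ, hσ, h⟩
  · exact absurd (h ▸ List.mem_singleton_self _ : Sum.inl 0 ∈ w.map Sum.inr) (by simp)
  · exact ⟨_, fun t t' htt' => (hσ t t' htt').1, eq_word_of_form_eq h.symm⟩

end Soundness

section Completeness

variable {m : ℕ} (hS : ∀ b, (S.slots b).card = m)
include hS

theorem modeStep_comp_group {f : Fin S.groups → ℕ × Phase} {b : Fin S.groups}
    {i : Fin (S.groups + 1)} (hi : ∀ b', (f b').2.owner b' = some i ↔ b' = b) {p : Phase}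
    (hp : p ∈ (f b).2.next) : S.system.ModeStep (.conj .t (.eq m)) (S.form (f ∘ S.group))
      (S.form (Function.update f b ((f b).1 + 1, p) ∘ S.group)) := by
  have howned : S.owned i (f ∘ S.group) = S.slots b := by
    ext t
    simp [mem_owned, slots, hi]
  refine modeStep_form_iff.2 ⟨i, _, by rw [howned, hS], fun t => ?_, rfl⟩
  rw [howned]
  by_cases ht : S.group t = b
  · simp [slots, ht, hp]
  · simp [slots, ht]

theorem transGen_cycle {f : Fin S.groups → ℕ × Phase} (hf : ∀ b, (f b).2 ≠ .active)
    {b : Fin S.groups} (hb : (f b).2 = .rest) {p : Phase} (hp : p ∈ Phase.active.next) :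
    Relation.TransGen (S.system.ModeStep (.conj .t (.eq m))) (S.form (f ∘ S.group))
      (S.form (Function.update f b ((f b).1 + 2, p) ∘ S.group)) := by
  have hwake := modeStep_comp_group hS (f := f) (b := b) (i := b.castSucc) (p := .active)
    (fun b' => by
      have := hf b'
      rcases eq_or_ne b' b with rfl | hne
      · simp [hb, Phase.owner]
      · cases hp : (f b').2 <;> simp_all [Phase.owner]) (by simp [hb, Phase.next])
  refine .tail (.single hwake) ?_
  convert modeStep_comp_group hS (i := Fin.last _) (b := b) (p := p) (fun b' => ?_) ?_ using 3
  · simp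
  · have := hf b'
    rcases eq_or_ne b' b with rfl | hne
    · simp [Phase.owner]
    · cases hp : (f b').2 <;> simp_all [Phase.owner, Fin.castSucc_ne_last]
  · simpa using hp

theorem transGen_done (k : ℕ) {f : Fin S.groups → ℕ × Phase} (hf : ∀ b, (f b).2 ≠ .active)
    {b : Fin S.groups} (hb : (f b).2 = .rest) :
    Relation.TransGen (S.system.ModeStep (.conj .t (.eq m))) (S.form (f ∘ S.group))
      (S.form (Function.update f b ((f b).1 + 2 * (k + 1), .done) ∘ S.group)) := by
  induction k generalizing f with
  | zero => exact transGen_cycle hS hf hb (by simp [Phase.next])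
  | succ k ih =>
    refine (transGen_cycle hS hf hb (p := .rest) (by simp [Phase.next])).trans ?_
    convert ih (f := Function.update f b ((f b).1 + 2, .rest)) (fun b' => ?_) (by simp) using 3
    · rw [Function.update_self, Function.update_idem, Nat.mul_add_one 2 (k + 1),
        Nat.add_comm _ 2, Nat.add_assoc]
    · rcases eq_or_ne b' b with rfl | hne
      · simp
      · simpa [hne] using hf b'

theorem word_mem_lang (hm : 1 ≤ m) (k : ℕ) :
    (S.word fun _ => 2 * (k + 1)) ∈ S.system.lang (.conj .t (.eq m)) := by
  let state (s : Finset (Fin S.groups)) : Fin S.groups → ℕ × Phase :=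
    s.piecewise (fun _ => (2 * (k + 1), .done)) fun _ => (0, .rest)
  have hreach (s : Finset (Fin S.groups)) : Relation.TransGen
      (S.system.ModeStep (.conj .t (.eq m))) [Sum.inl 0] (S.form (state s ∘ S.group)) := by
    induction s using Finset.induction_on with
    | empty => exact .single (modeStep_start hm)
    | insert b s hbs ih =>
      refine ih.trans ?_
      convert transGen_done hS k (f := state s) (b := b) (fun b' => ?_) ?_ using 3
      · simp [state, Finset.piecewise_insert, hbs]
      · by_cases hb' : b' ∈ s <;> simp [state, hb']
      · simp [state, hbs]
  have huniv := hreach Finset.univ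
  simp only [state, Finset.piecewise_univ] at huniv
  rwa [CDGS.lang, Set.mem_ofPred_eq, ← form_done]

end Completeness

theorem lamFree_system (h : 0 < S.size) : S.system.LamFree := by
  intro i r hr
  rcases mem_rules.1 hr with ⟨-, rfl | rfl⟩ | ⟨t, p, -, p', -, rfl⟩
  · simp
  · have hmem := inl_code_mem_form (σ := S.init) (t := ⟨0, h⟩) (p := .rest)
    exact List.ne_nil_of_mem (hmem.2 (by simp [init]))
  · simp [emit]

section Words

variable [LinearOrder T] (hletter : StrictMono S.letter)
include hletter

theorem pairwise_word (c : Fin S.size → ℕ) : (S.word c).Pairwise (· ≤ ·) := by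
  have hle (t : Fin S.size) : S.letter (toLex (t, false)) ≤ S.letter (toLex (t, true)) :=
    hletter.monotone (Prod.Lex.toLex_le_toLex.2 (.inr ⟨rfl, Bool.false_le _⟩))
  have hlt {t t' : Fin S.size} (h : t < t') (s s' : Bool) :
      S.letter (toLex (t, s)) ≤ S.letter (toLex (t', s')) :=
    hletter.monotone (Prod.Lex.toLex_le_toLex.2 (.inl h))
  refine List.pairwise_flatMap.2 ⟨fun t _ => ?_, ?_⟩
  · simp [List.pairwise_append, List.pairwise_replicate, hle]
  · refine (List.pairwise_lt_finRange _).imp fun h => ?_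
    simp only [List.mem_append, List.mem_replicate]
    rintro _ (⟨-, rfl⟩ | ⟨-, rfl⟩) _ (⟨-, rfl⟩ | ⟨-, rfl⟩) <;> exact hlt h _ _

theorem count_letter_word (c : Fin S.size → ℕ) (t : Fin S.size) (s : Bool) :
    (S.word c).count (S.letter (toLex (t, s))) = c t := by
  have hcount (t' : Fin S.size) : List.count (S.letter (toLex (t, s)))
      (List.replicate (c t') (S.letter (toLex (t', false))) ++
        List.replicate (c t') (S.letter (toLex (t', true)))) = if t' = t then c t else 0 := by
    by_cases h : t' = t <;> cases s <;>
      simp [List.count_replicate, hletter.injective.eq_iff, h]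
  simp only [word, List.count_flatMap, Function.comp_def, hcount]
  rw [← List.ofFn_eq_map, List.sum_ofFn]
  simp

theorem card_letters (b : Fin S.groups) : (S.letters b).card = 2 * (S.slots b).card := by
  have hinj : Function.Injective fun x : Fin S.size × Bool => S.letter (toLex x) :=
    hletter.injective.comp toLex.injective
  rw [letters, Finset.card_image_of_injective _ hinj, Finset.card_product, Finset.card_univ,
    Fintype.card_bool, Nat.mul_comm]

theorem letters_lt_letters (hgroup : Monotone S.group) {b b' : Fin S.groups} (h : b < b') :
    ∀ a ∈ S.letters b, ∀ c ∈ S.letters b', a < c := by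
  simp only [mem_letters]
  rintro _ ⟨t, s, rfl, rfl⟩ _ ⟨t', s', rfl, rfl⟩
  exact hletter (Prod.Lex.toLex_lt_toLex.2 (.inl (hgroup.reflect_lt h)))

theorem balanced_letters {m : ℕ} (hS : ∀ b, (S.slots b).card = m) (b : Fin S.groups) :
    Balanced (S.system.lang (.conj .t (.eq m))) (S.letters b) := by
  intro w hw
  obtain ⟨c, hc, rfl⟩ := exists_word_of_mem_lang hS hw
  simp only [mem_letters]
  rintro _ ⟨t, s, ht, rfl⟩ _ ⟨t', s', ht', rfl⟩
  rw [count_letter_word hletter, count_letter_word hletter, hc t t' (ht.trans ht'.symm)]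

end Words

theorem lang_notMem_CDFamIndInf [LinearOrder T] (hletter : StrictMono S.letter)
    (hgroup : Monotone S.group) (hgroups : 2 ≤ S.groups) {m : ℕ} (hm : 1 ≤ m)
    (hS : ∀ b, (S.slots b).card = m) (lf : Bool) :
    S.system.lang (.conj .t (.eq m)) ∉ CDFamIndInf T lf (.conj .t (.eq m)) m := by
  let b₀ : Fin S.groups := ⟨0, by omega⟩
  let b₁ : Fin S.groups := ⟨1, by omega⟩
  refine notMem_CDFamIndInf (f := .conj .t (.eq m)) lf (fun _ _ _ h => h.2.le) hm
    (letters_lt_letters hletter hgroup (show b₀ < b₁ from Nat.zero_lt_one))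
    (by rw [card_letters hletter, hS]) (by rw [card_letters hletter, hS]) (fun w hw => ?_)
    (balanced_letters hletter hS b₀) (balanced_letters hletter hS b₁) fun N => ?_
  · obtain ⟨c, -, rfl⟩ := exists_word_of_mem_lang hS hw
    exact pairwise_word hletter c
  · refine ⟨_, word_mem_lang hS hm N, 2 * (N + 1), by omega, fun d hd => ?_⟩
    rcases Finset.mem_union.1 hd with hd | hd <;> obtain ⟨t, s, -, rfl⟩ := mem_letters.1 hd <;>
      exact count_letter_word hletter _ t s

end SlotSystem

theorem nonempty_orderEmbedding_of_infinite (α β : Type*) [LinearOrder α] [Finite α]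
    [LinearOrder β] [Infinite β] : Nonempty (α ↪o β) := by
  have := Fintype.ofFinite α
  obtain ⟨s, hs⟩ := Infinite.exists_subset_card_eq β (Fintype.card α)
  exact ⟨(Fintype.orderIsoFinOfCardEq α rfl).symm.toOrderEmbedding.trans (s.orderEmbOfFin hs)⟩

theorem card_filter_divNat_eq {m n : ℕ} (b : Fin m) :
    (Finset.univ.filter fun t : Fin (m * n) => t.divNat = b).card = n := by
  calc _ = (({b} : Finset (Fin m)) ×ˢ (Finset.univ : Finset (Fin n))).card :=
        Finset.card_equiv finProdFinEquiv.symm (by simp [eq_comm])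
    _ = n := by simp

theorem stmt17_general {T : Type} [Infinite T] (lf : Bool) {n m : ℕ} (hn : 3 ≤ n) (hm : 1 ≤ m) :
    CDFamInd T lf n (.conj .t (.eq m)) m ⊂ CDFam T lf n (.conj .t (.eq m)) := by
  classical
  let _ : LinearOrder T := linearOrderOfSTO WellOrderingRel
  obtain ⟨letter⟩ := nonempty_orderEmbedding_of_infinite (Fin (2 * m) ×ₗ Bool) T
  let S : SlotSystem T := ⟨2 * m, 2, Fin.divNat, letter⟩
  have hmono : Monotone S.group := fun t t' h => Nat.div_le_div_right h
  refine Set.ssubset_iff_exists.2 ⟨fun L ⟨G, hdeg, hlf, hL, _⟩ => ⟨G, hdeg, hlf, hL⟩,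
    S.system.lang _, ⟨S.system, hn, fun _ => SlotSystem.lamFree_system ?_, rfl⟩, ?_⟩
  · exact Nat.mul_pos Nat.two_pos hm
  · rintro ⟨G, -, hG⟩
    exact S.lang_notMem_CDFamIndInf letter.strictMono hmono le_rfl hm
      card_filter_divNat_eq lf ⟨G, hG⟩

/-- For every m ∈ ℕ (positive),
L_m(CD_3, CF[−λ], (t∧=m)) ⊊ L(CD_3, CF[−λ], (t∧=m)),
both with and without erasing rules. -/
theorem stmt17 (lf : Bool) (m : ℕ) (hm : 1 ≤ m) :
    CDFamInd ℕ lf 3 (Mode.conj Mode.t (Mode.eq m)) m ⊂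
      CDFam ℕ lf 3 (Mode.conj Mode.t (Mode.eq m)) :=
  stmt17_general lf le_rfl hm

end CDHybrid
end
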